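/- arXiv:2008.00755 — 3 statements merged into one kernel-verified Lean document; each statement's English description precedes it below -/
import Mathlib

section
/- Let L/K be a finitely σ-generated Galois extension of difference fields. Then there exists a chain K ⊆ L₁ ⊆ L₂ ⊆ … ⊆ L_n ⊆ L of intermediate σ-fields such that L₁ = π₀^σ(L/K), for i = 1,…,n−1 the extension L_{i+1}/L_i is benign with Galois group isomorphic, as an expansive profinite group, to the full one-sided group shift on some finite simple group Γ_i, and L/L_n is σ-radicial. Moreover, the length n of such a chain and the isomorphism classes of the finite simple groups Γ_i are uniquely determined by L/K. -/
open Function Set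

/-- The shift map on the full one-sided group shift `Γ^ℕ`, as a group homomorphism. -/
def shiftHom (Γ : Type*) [Group Γ] : (ℕ → Γ) →* (ℕ → Γ) where
  toFun a := fun n => a (n + 1)
  map_one' := rfl
  map_mul' _ _ := rfl

/-- A finite simple group, bundled with its (discrete) topology. -/
structure FinSimpleGroup : Type 1 where
  carrier : Type
  [group : Group carrier]
  [finite : Finite carrier]
  [simple : IsSimpleGroup carrier]

attribute [instance] FinSimpleGroup.group FinSimpleGroup.finite FinSimpleGroup.simple

instance (Γ : FinSimpleGroup) : TopologicalSpace Γ.carrier := ⊥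
instance (Γ : FinSimpleGroup) : DiscreteTopology Γ.carrier := ⟨rfl⟩

section DifferenceGalois

variable {K L : Type*} [Field K] [Field L] [Algebra K L]

/-- `M/K` is σ-separable: `σ` maps every `K`-linearly independent finite family of
elements of `M` to a `K`-linearly independent family. -/
def SigmaSeparable (σ : L →+* L) (M : IntermediateField K L) : Prop :=
  ∀ (k : ℕ) (f : Fin k → L), (∀ j, f j ∈ M) →
    LinearIndependent K f → LinearIndependent K (⇑σ ∘ f)

/-- The defining property of `π₀^σ(L/K)`: an intermediate σ-field `M` of `L/K` such that
`M/K` is finite, Galois and σ-separable. `π₀^σ(L/K)` is the largest such `M`. -/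
def IsPi0Field (σ : L →+* L) (M : IntermediateField K L) : Prop :=
  (∀ x ∈ M, σ x ∈ M) ∧ FiniteDimensional K ↥M ∧ IsGalois K ↥M ∧ SigmaSeparable σ M

/-- The extension `E/F` (of intermediate σ-fields of `L/K`) is benign: there is an
intermediate field `F ⊆ M ⊆ E` with `M/F` finite Galois, `E = F⟨M⟩`,
`[F(σⁿ(M)) : F] = [M : F]` for all `n`, and the fields `F(σⁿ(M))` linearly disjoint over
`F` (expressed by `[F(M ∪ σ(M) ∪ ⋯ ∪ σⁿ(M)) : F] = [M : F]^{n+1}`). -/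
def BenignExtension (σ : L →+* L) (F E : IntermediateField K L) (h : F ≤ E) : Prop :=
  ∃ M : IntermediateField ↥F L,
    M ≤ IntermediateField.extendScalars h ∧
    FiniteDimensional ↥F ↥M ∧
    IsGalois ↥F ↥M ∧
    IntermediateField.adjoin ↥F (⋃ n : ℕ, (⇑σ)^[n] '' (M : Set L)) =
      IntermediateField.extendScalars h ∧
    (∀ n : ℕ,
      Module.finrank ↥F ↥(IntermediateField.adjoin ↥F ((⇑σ)^[n] '' (M : Set L))) =
        Module.finrank ↥F ↥M) ∧
    (∀ n : ℕ,
      Module.finrank ↥F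
          ↥(IntermediateField.adjoin ↥F (⋃ k : Fin (n + 1), (⇑σ)^[(k : ℕ)] '' (M : Set L))) =
        Module.finrank ↥F ↥M ^ (n + 1))

/-- The Galois group of `E/F` (for intermediate σ-fields `F ≤ E` of `L/K`), together with
its induced endomorphism `g ↦ g^σ`, is isomorphic as an expansive profinite group to the
full one-sided group shift on `Γ`.  This is encoded via the restriction surjection
`Gal(L/F) → Gal(E/F)`: there is a continuous surjective homomorphism
`ψ : Gal(L/F) → Γ^ℕ`, equivariant for `g ↦ g^σ` and the shift, whose kernel is
`Gal(L/E)`; since all groups involved are compact Hausdorff this faithfully encodes a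
σ-equivariant isomorphism of topological groups `Gal(E/F) ≅ Γ^ℕ`. -/
def GaloisFactorIsFullShift (σ : L →+* L) (F E : IntermediateField K L)
    (Γ : FinSimpleGroup) : Prop :=
  ∃ ψ : (L ≃ₐ[↥F] L) →* (ℕ → Γ.carrier),
    Continuous ψ ∧ Function.Surjective ψ ∧
    (∀ g h : L ≃ₐ[↥F] L, (∀ x : L, σ (h x) = g (σ x)) →
      ψ h = shiftHom Γ.carrier (ψ g)) ∧
    (∀ g : L ≃ₐ[↥F] L, ψ g = 1 ↔ ∀ x ∈ E, g x = x)

/-- A chain `K ⊆ L₁ ⊆ ⋯ ⊆ L_n ⊆ L` (here `Li i = L_{i+1}`) witnessing Babbitt's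
decomposition: all members are intermediate σ-fields; `L₁ = π₀^σ(L/K)`; each extension
`L_{i+1}/L_i` is benign with Galois group isomorphic (as an expansive profinite group) to
the full one-sided group shift on the finite simple group `Γ i`; and `L/L_n` is
σ-radicial. -/
def BabbittSeries (σ : L →+* L) (n : ℕ) (Li : ℕ → IntermediateField K L)
    (Γ : ℕ → FinSimpleGroup) : Prop :=
  1 ≤ n ∧
  (∀ i, i < n → ∀ x ∈ Li i, σ x ∈ Li i) ∧
  ∃ hchain : ∀ i, i + 1 < n → Li i ≤ Li (i + 1),
    (IsPi0Field σ (Li 0) ∧ ∀ M : IntermediateField K L, IsPi0Field σ M → M ≤ Li 0) ∧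
    (∀ i, ∀ hi : i + 1 < n,
      BenignExtension σ (Li i) (Li (i + 1)) (hchain i hi) ∧
      GaloisFactorIsFullShift σ (Li i) (Li (i + 1)) (Γ i)) ∧
    (∀ a : L, ∃ k : ℕ, (⇑σ)^[k] a ∈ Li (n - 1))

end DifferenceGalois

/-!
Write `s` for the endomorphism `g ↦ g^σ` of `G = Gal(L/K)`. The Galois correspondence turns chains
of intermediate σ-fields into chains of closed `s`-invariant subgroups, and `π₀^σ(L/K)` corresponds
to the closure `G°` of the group of all elements killed by some iterate of `s`.

Existence: the images `s^[k] G°` stabilize, which reduces the problem to a surjective `s` with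
`G = G°`. Some continuous epimorphism `f` onto a finite simple group `Γ` is then nontrivial on
`ker s`, hence maps `ker s` onto `Γ`, and `x ↦ (f x, f (s x), f (s² x), …)` is an equivariant
surjection `G → Γ^ℕ` whose kernel `N` has a smaller `ker s ∩ N`. To induct on `|ker s|` one needs
`N° = N`. For nonabelian `Γ` this is a commutator argument. For `Γ = ZMod p` the characters of
`G / N°` form a module over `(ZMod p)[X]`, with `X` acting by composition with `s`. Some
`X ^ m - X ^ k` multiplies it injectively into the cyclic submodule generated by `f`, so it is
itself cyclic, and `f` is replaced by a generator.

Uniqueness: the multiplicity of a simple group `Δ` among the composition factors of the finite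
group `ker (s^[k])` is `k * #{i | Γ i ≅ Δ}` up to an error bounded independently of `k`.
-/

/-! ### Endomorphisms of groups -/

section Iterates

variable {G : Type*} [Group G]

/-- The iterate `s^[k]` of a group endomorphism, as a homomorphism. -/
def iterateHom (s : G →* G) (k : ℕ) : G →* G := (show Monoid.End G from s) ^ k

@[simp]
theorem iterateHom_apply (s : G →* G) (k : ℕ) (x : G) : iterateHom s k x = s^[k] x :=
  congrFun (Monoid.End.coe_pow G s k) x

theorem iterateHom_map (s : G →* G) (k : ℕ) (x : G) :
    iterateHom s k (s x) = s (iterateHom s k x) := by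
  rw [iterateHom_apply, iterateHom_apply, ← iterate_succ_apply, iterate_succ_apply']

theorem mem_ker_iterateHom {s : G →* G} {k : ℕ} {x : G} :
    x ∈ (iterateHom s k).ker ↔ s^[k] x = 1 := by
  rw [MonoidHom.mem_ker, iterateHom_apply]

theorem ker_iterateHom_mono (s : G →* G) : Monotone fun k => (iterateHom s k).ker := by
  intro k l hkl x hx
  rw [mem_ker_iterateHom] at hx ⊢
  rw [← Nat.sub_add_cancel hkl, iterate_add_apply, hx, iterate_map_one]

/-- The elements that are killed by some iterate of `s`. -/
def eventualKernel (s : G →* G) : Subgroup G := ⨆ k, (iterateHom s k).ker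

theorem mem_eventualKernel {s : G →* G} {x : G} : x ∈ eventualKernel s ↔ ∃ k, s^[k] x = 1 := by
  simp only [eventualKernel, Subgroup.mem_iSup_of_directed (ker_iterateHom_mono s).directed_le,
    mem_ker_iterateHom]

instance eventualKernel_normal (s : G →* G) : (eventualKernel s).Normal :=
  Subgroup.iSup_normal fun k => (iterateHom s k).ker

theorem apply_mem_eventualKernel_iff {s : G →* G} {x : G} :
    s x ∈ eventualKernel s ↔ x ∈ eventualKernel s := by
  simp only [mem_eventualKernel]
  refine ⟨fun ⟨k, hk⟩ => ⟨k + 1, hk⟩, fun ⟨k, hk⟩ => ⟨k, ?_⟩⟩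
  rw [← iterate_succ_apply, iterate_succ_apply', hk, map_one]

/-- The elements whose first `k` iterates under `s` lie in `U`. -/
def cylinder (s : G →* G) (U : Subgroup G) (k : ℕ) : Subgroup G :=
  ⨅ j : Fin k, U.comap (iterateHom s j)

theorem mem_cylinder {s : G →* G} {U : Subgroup G} {k : ℕ} {x : G} :
    x ∈ cylinder s U k ↔ ∀ j < k, s^[j] x ∈ U := by
  simp only [cylinder, Subgroup.mem_iInf, Subgroup.mem_comap, iterateHom_apply, Fin.forall_iff]

instance cylinder_normal (s : G →* G) (U : Subgroup G) [U.Normal] (k : ℕ) :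
    (cylinder s U k).Normal :=
  Subgroup.normal_iInf_normal fun _ => inferInstance

theorem cylinder_antitone (s : G →* G) (U : Subgroup G) : Antitone (cylinder s U) :=
  fun _ _ hkl _ hx => mem_cylinder.2 fun j hj => mem_cylinder.1 hx j (hj.trans_le hkl)

theorem mem_cylinder_succ {s : G →* G} {U : Subgroup G} {k : ℕ} {x : G} :
    x ∈ cylinder s U (k + 1) ↔ x ∈ U ∧ s x ∈ cylinder s U k := by
  simp only [mem_cylinder]
  refine ⟨fun h => ⟨h 0 k.succ_pos, fun j hj => h (j + 1) (Nat.succ_lt_succ hj)⟩, ?_⟩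
  rintro ⟨h0, h⟩ (_ | j) hj
  · exact h0
  · exact h j (Nat.lt_of_succ_lt_succ hj)

theorem map_cylinder_succ_le (s : G →* G) (U : Subgroup G) (k : ℕ) :
    (cylinder s U (k + 1)).map s ≤ cylinder s U k :=
  Subgroup.map_le_iff_le_comap.2 fun _ hx => (mem_cylinder_succ.1 hx).2

theorem relIndex_cylinder_succ_mul (s : G →* G) (U : Subgroup G) [U.Normal] (k : ℕ) :
    (cylinder s U (k + 3)).relIndex (cylinder s U (k + 2)) *
        ((cylinder s U (k + 2)).map s ⊔ cylinder s U (k + 2)).relIndex (cylinder s U (k + 1)) =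
      (cylinder s U (k + 2)).relIndex (cylinder s U (k + 1)) := by
  have hcomap : cylinder s U (k + 3) = (cylinder s U (k + 2)).comap s ⊓ cylinder s U (k + 2) := by
    ext x
    rw [Subgroup.mem_inf, Subgroup.mem_comap]
    exact ⟨fun h => ⟨(mem_cylinder_succ.1 h).2, cylinder_antitone s U (Nat.le_succ _) h⟩,
      fun h => mem_cylinder_succ.2 ⟨(mem_cylinder_succ.1 h.2).1, h.1⟩⟩
  rw [hcomap, Subgroup.inf_relIndex_right, Subgroup.relIndex_comap,
    ← Subgroup.relIndex_sup_right]
  exact Subgroup.relIndex_mul_relIndex _ _ _ le_sup_right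
    (sup_le (map_cylinder_succ_le s U _) (cylinder_antitone s U (Nat.le_succ _)))

theorem exists_forall_cylinder_le_map_sup (s : G →* G) (U : Subgroup G) [U.Normal]
    (hfin : ∀ k, (cylinder s U k).FiniteIndex) :
    ∃ r, ∀ k, r ≤ k → cylinder s U k ≤ (cylinder s U (k + 1)).map s ⊔ cylinder s U (k + 1) := by
  let index (k : ℕ) : ℕ := (cylinder s U (k + 2)).relIndex (cylinder s U (k + 1))
  have index_ne_zero (k : ℕ) : index k ≠ 0 := by
    have := hfin (k + 2)
    exact Subgroup.isFiniteRelIndex_of_finiteIndex.relIndex_ne_zero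
  have index_antitone : Antitone index := antitone_nat_of_succ_le fun k =>
    Nat.le_of_dvd (Nat.pos_of_ne_zero (index_ne_zero k))
      ⟨_, (relIndex_cylinder_succ_mul s U k).symm⟩
  obtain ⟨r, hr⟩ := WellFoundedGT.monotone_chain_condition
    (⟨fun k => OrderDual.toDual (index k), index_antitone⟩ : ℕ →o ℕᵒᵈ)
  refine ⟨r + 1, fun k hk => ?_⟩
  obtain ⟨k, rfl⟩ := Nat.exists_eq_add_of_le' (Nat.le_of_add_left_le hk)
  have hstable : index (k + 1) = index k :=
    (hr (k + 1) (by omega)).symm.trans (hr k (by omega))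
  have hmul : index (k + 1) * _ = index k := relIndex_cylinder_succ_mul s U k
  rw [hstable] at hmul
  exact Subgroup.relIndex_eq_one.1 ((Nat.mul_eq_left (index_ne_zero k)).1 hmul)

theorem cylinder_le_map_sup {s : G →* G} {U : Subgroup G} {r : ℕ}
    (hr : ∀ k, r ≤ k → cylinder s U k ≤ (cylinder s U (k + 1)).map s ⊔ cylinder s U (k + 1))
    {k l : ℕ} (hk : r ≤ k) (hkl : k ≤ l) :
    cylinder s U k ≤ (cylinder s U (k + 1)).map s ⊔ cylinder s U l := by
  induction l, hkl using Nat.le_induction with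
  | base => exact le_sup_right
  | succ l hkl ih =>
    calc cylinder s U k
      _ ≤ (cylinder s U (k + 1)).map s ⊔ cylinder s U l := ih
      _ ≤ (cylinder s U (k + 1)).map s ⊔ ((cylinder s U (l + 1)).map s ⊔ cylinder s U (l + 1)) :=
        sup_le_sup_left (hr l (hk.trans hkl)) _
      _ ≤ (cylinder s U (k + 1)).map s ⊔ cylinder s U (l + 1) := by
        rw [← sup_assoc, ← Subgroup.map_sup,
          sup_eq_left.2 (cylinder_antitone s U (Nat.add_le_add_right hkl 1))]

theorem le_map_iterateHom {s : G →* G} {V : ℕ → Subgroup G} (h : ∀ k, V k ≤ (V (k + 1)).map s)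
    (k : ℕ) : V 0 ≤ (V k).map (iterateHom s k) := by
  induction k with
  | zero => exact fun x hx => ⟨x, hx, by simp⟩
  | succ k ih =>
    intro x hx
    obtain ⟨y, hy, rfl⟩ := ih hx
    obtain ⟨z, hz, rfl⟩ := h k hy
    exact ⟨z, hz, by simp⟩

theorem finite_subgroups_ge (V : Subgroup G) [V.Normal] [V.FiniteIndex] :
    Finite {H : Subgroup G // V ≤ H} :=
  Finite.of_equiv _ (QuotientGroup.comapMk'OrderIso V).toEquiv

theorem exists_eq_of_antitone_of_le {V : Subgroup G} [V.Normal] [V.FiniteIndex]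
    {H : ℕ → Subgroup G} (hanti : Antitone H) (hV : ∀ k, V ≤ H k) :
    ∃ n, ∀ k, n ≤ k → H k = H n := by
  have := finite_subgroups_ge V
  obtain ⟨n, hn⟩ := WellFoundedGT.monotone_chain_condition
    (⟨fun k => OrderDual.toDual ⟨H k, hV k⟩, fun _ _ h => hanti h⟩ :
      ℕ →o {H : Subgroup G // V ≤ H}ᵒᵈ)
  exact ⟨n, fun k hk => congrArg Subtype.val (hn k hk).symm⟩

theorem exists_eq_of_monotone {V : Subgroup G} [V.Normal] [V.FiniteIndex]
    {H : ℕ → Subgroup G} (hmono : Monotone H) (hV : ∀ k, V ≤ H k) :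
    ∃ n, ∀ k, n ≤ k → H k = H n := by
  have := finite_subgroups_ge V
  obtain ⟨n, hn⟩ := WellFoundedGT.monotone_chain_condition
    (⟨fun k => ⟨H k, hV k⟩, fun _ _ h => hmono h⟩ : ℕ →o {H : Subgroup G // V ≤ H})
  exact ⟨n, fun k hk => congrArg Subtype.val (hn k hk).symm⟩

end Iterates

/-! ### Expansive endomorphisms -/

section Expansive

variable {G : Type*} [Group G]

/-- `U` separates the orbits of `s`: `⋂ₙ s⁻ⁿ(U) = 1`. -/
def IsSeparating (s : G →* G) (U : Subgroup G) : Prop :=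
  ∀ x, (∀ n, s^[n] x ∈ U) → x = 1

/-- An expansive endomorphism of a topological group. -/
structure IsExpansive [TopologicalSpace G] (s : G →* G) : Prop where
  continuous : Continuous s
  exists_separating : ∃ U : Subgroup G, IsOpen (U : Set G) ∧ IsSeparating s U

variable [TopologicalSpace G]

theorem continuous_iterateHom {s : G →* G} (hs : Continuous s) (k : ℕ) :
    Continuous (iterateHom s k) := by
  simpa only [funext (iterateHom_apply s k)] using hs.iterate k

theorem isOpen_cylinder {s : G →* G} (hs : Continuous s) {U : Subgroup G}
    (hU : IsOpen (U : Set G)) (k : ℕ) : IsOpen (cylinder s U k : Set G) := by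
  rw [cylinder, Subgroup.coe_iInf]
  exact isOpen_iInter_of_finite fun j => hU.preimage (continuous_iterateHom hs j)

variable [IsTopologicalGroup G]

/-- The `σ`-identity component: the closure of the subgroup of elements killed by an iterate
of `s`. It is the group-theoretic counterpart of the field `π₀^σ`. -/
def sigmaComponent (s : G →* G) : Subgroup G := (eventualKernel s).topologicalClosure

instance sigmaComponent_normal (s : G →* G) : (sigmaComponent s).Normal :=
  Subgroup.is_normal_topologicalClosure _

theorem isClosed_sigmaComponent (s : G →* G) : IsClosed (sigmaComponent s : Set G) :=
  Subgroup.isClosed_topologicalClosure _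

theorem finiteIndex_of_isOpen [CompactSpace G] {U : Subgroup G} (hU : IsOpen (U : Set G)) :
    U.FiniteIndex :=
  have := Subgroup.quotient_finite_of_isOpen U hU
  Subgroup.finiteIndex_of_finite_quotient

theorem IsExpansive.exists_normal_separating [CompactSpace G] {s : G →* G} (hs : IsExpansive s) :
    ∃ U : Subgroup G, U.Normal ∧ IsOpen (U : Set G) ∧ IsSeparating s U := by
  obtain ⟨U, hU, hsep⟩ := hs.exists_separating
  have := finiteIndex_of_isOpen hU
  exact ⟨U.normalCore, inferInstance, Subgroup.isOpen_of_isClosed_of_finiteIndex _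
    (U.normalCore_isClosed (Subgroup.isClosed_of_isOpen U hU)),
    fun x hx => hsep x fun n => U.normalCore_le (hx n)⟩

theorem exists_cylinder_subset [CompactSpace G] {s : G →* G} (hs : Continuous s) {U : Subgroup G}
    (hU : IsOpen (U : Set G)) {V : Set G} (hV : IsOpen V)
    (h : ∀ x, (∀ n, s^[n] x ∈ U) → x ∈ V) : ∃ k, (cylinder s U k : Set G) ⊆ V := by
  refine exists_subset_nhds_of_compactSpace (V := fun k => (cylinder s U k : Set G))
    (fun k l => ⟨max k l, cylinder_antitone s U (le_max_left k l),
      cylinder_antitone s U (le_max_right k l)⟩)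
    (fun k => Subgroup.isClosed_of_isOpen _ (isOpen_cylinder hs hU k))
    fun x hx => hV.mem_nhds (h x fun n => ?_)
  exact mem_cylinder.1 (mem_iInter.1 hx (n + 1)) n n.lt_succ_self

theorem mem_of_forall_mem_sup_cylinder [CompactSpace G] {s : G →* G} (hs : Continuous s)
    {U : Subgroup G} [U.Normal] (hU : IsOpen (U : Set G)) (hsep : IsSeparating s U)
    {H : Subgroup G} (hH : IsClosed (H : Set G)) {x : G}
    (hx : ∀ k, x ∈ H ⊔ cylinder s U k) : x ∈ H := by
  by_contra hxH
  obtain ⟨k, hk⟩ := exists_cylinder_subset hs hU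
    (hH.isOpen_compl.preimage (by fun_prop : Continuous fun u : G => x * u⁻¹))
    fun u hu => by simpa [hsep u hu] using hxH
  obtain ⟨y, hy, u, hu, rfl⟩ := Subgroup.mem_sup_of_normal_right.1 (hx k)
  exact hk hu (by simpa using hy)

theorem IsExpansive.finite_ker_iterateHom [CompactSpace G] {s : G →* G} (hs : IsExpansive s)
    (k : ℕ) : Finite (iterateHom s k).ker := by
  obtain ⟨U, hU, hsep⟩ := hs.exists_separating
  have := Subgroup.quotient_finite_of_isOpen _ (isOpen_cylinder hs.continuous hU k)
  refine Finite.of_injective (fun x : (iterateHom s k).ker => (x.1 : G ⧸ cylinder s U k))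
    fun x y hxy => Subtype.ext (inv_mul_eq_one.1 (hsep _ fun n => ?_))
  rcases lt_or_ge n k with hn | hn
  · exact mem_cylinder.1 (QuotientGroup.eq.1 hxy) n hn
  · rw [mem_ker_iterateHom.1 (ker_iterateHom_mono s hn (mul_mem (inv_mem x.2) y.2))]
    exact U.one_mem

theorem IsExpansive.finite_ker [CompactSpace G] {s : G →* G} (hs : IsExpansive s) :
    Finite s.ker :=
  hs.finite_ker_iterateHom 1

variable [CompactSpace G] [T2Space G]

theorem exists_forall_cylinder_le_map {s : G →* G} (hs : Continuous s) {U : Subgroup G} [U.Normal]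
    (hU : IsOpen (U : Set G)) (hsep : IsSeparating s U) :
    ∃ r, ∀ k, r ≤ k → cylinder s U k ≤ (cylinder s U (k + 1)).map s := by
  obtain ⟨r, hr⟩ := exists_forall_cylinder_le_map_sup s U
    fun k => finiteIndex_of_isOpen (isOpen_cylinder hs hU k)
  refine ⟨r, fun k hk x hx => ?_⟩
  have hclosed : IsClosed ((cylinder s U (k + 1)).map s : Set G) :=
    ((Subgroup.isClosed_of_isOpen _ (isOpen_cylinder hs hU (k + 1))).isCompact.image hs).isClosed
  refine mem_of_forall_mem_sup_cylinder hs hU hsep hclosed fun l => ?_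
  exact sup_le_sup_left (cylinder_antitone s U (le_max_right k l)) _
    (cylinder_le_map_sup hr hk (le_max_left k l) hx)

theorem IsExpansive.exists_open_le_sigmaComponent {s : G →* G} (hs : IsExpansive s) :
    ∃ V : Subgroup G, V.Normal ∧ IsOpen (V : Set G) ∧ V ≤ sigmaComponent s ∧ V ≤ V.map s := by
  obtain ⟨U, _, hU, hsep⟩ := hs.exists_normal_separating
  obtain ⟨r, hr⟩ := exists_forall_cylinder_le_map hs.continuous hU hsep
  set V := cylinder s U r
  have hVopen : IsOpen (V : Set G) := isOpen_cylinder hs.continuous hU r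
  have hVmap : V ≤ V.map s := (hr r le_rfl).trans
    (Subgroup.map_mono (cylinder_antitone s U (Nat.le_succ r)))
  refine ⟨V, inferInstance, hVopen, fun x hx => ?_, hVmap⟩
  have := finiteIndex_of_isOpen hVopen
  have himage_mono : Monotone fun j => V.map (iterateHom s j) :=
    monotone_nat_of_le_succ fun j x ⟨y, hy, hyx⟩ => by
      obtain ⟨z, hz, rfl⟩ := hVmap hy
      exact ⟨z, hz, by simpa using hyx⟩
  obtain ⟨J, hJ⟩ := exists_eq_of_monotone himage_mono
    (le_map_iterateHom fun _ => hVmap)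
  refine mem_of_forall_mem_sup_cylinder hs.continuous hU hsep (isClosed_sigmaComponent s)
    fun k => ?_
  -- `s^[J + k]` and `s^[J]` have the same image on `V`, and `s^[k]` maps a small cylinder onto `V`.
  have hxk : iterateHom s (J + k) x ∈ V.map (iterateHom s J) :=
    hJ (J + k) (Nat.le_add_right J k) ▸ Subgroup.mem_map_of_mem _ hx
  obtain ⟨y, hy, hyx⟩ := hxk
  obtain ⟨z, hz, rfl⟩ := le_map_iterateHom (V := fun j => cylinder s U (r + j))
    (fun j => hr (r + j) (Nat.le_add_right r j)) k hy
  have hker : x * z⁻¹ ∈ eventualKernel s := mem_eventualKernel.2 ⟨J + k, by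
    simp only [iterateHom_apply, ← iterate_add_apply] at hyx
    rw [iterate_map_mul, iterate_map_inv, hyx, mul_inv_cancel]⟩
  rw [← inv_mul_cancel_right x z]
  exact Subgroup.mul_mem_sup (Subgroup.le_topologicalClosure _ hker)
    (cylinder_antitone s U (Nat.le_add_left k r) hz)

theorem IsExpansive.isOpen_sigmaComponent {s : G →* G} (hs : IsExpansive s) :
    IsOpen (sigmaComponent s : Set G) := by
  obtain ⟨V, -, hV, hVle, -⟩ := hs.exists_open_le_sigmaComponent
  exact Subgroup.isOpen_mono hVle hV

theorem IsExpansive.apply_mem_sigmaComponent_iff {s : G →* G} (hs : IsExpansive s) {x : G} :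
    s x ∈ sigmaComponent s ↔ x ∈ sigmaComponent s := by
  constructor
  · obtain ⟨V, _, hV, hVle, hVmap⟩ := hs.exists_open_le_sigmaComponent
    intro hx
    have hopen : IsOpen ((eventualKernel s ⊔ V : Subgroup G) : Set G) :=
      Subgroup.isOpen_mono le_sup_right hV
    obtain ⟨d, hd, v, hv, hdv⟩ := Subgroup.mem_sup_of_normal_right.1
      (Subgroup.topologicalClosure_minimal _ le_sup_left (Subgroup.isClosed_of_isOpen _ hopen) hx)
    obtain ⟨y, hy, rfl⟩ := hVmap hv
    have hxy : x * y⁻¹ ∈ eventualKernel s := apply_mem_eventualKernel_iff.1 <| by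
      rwa [map_mul, map_inv, ← hdv, mul_inv_cancel_right]
    rw [← inv_mul_cancel_right x y]
    exact mul_mem (Subgroup.le_topologicalClosure _ hxy) (hVle hy)
  · exact fun hx => map_mem_closure hs.continuous hx fun _ => apply_mem_eventualKernel_iff.2

end Expansive

/-! ### Restriction to invariant subgroups -/

section Restrict

variable {G : Type*} [Group G]

/-- The restriction of an endomorphism to an invariant subgroup. -/
def restrictHom (s : G →* G) (H : Subgroup G) (hH : ∀ x ∈ H, s x ∈ H) : H →* H :=
  (s.comp H.subtype).codRestrict H fun x => hH x x.2

@[simp]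
theorem coe_restrictHom (s : G →* G) (H : Subgroup G) (hH : ∀ x ∈ H, s x ∈ H) (x : H) :
    (restrictHom s H hH x : G) = s x := rfl

theorem coe_iterate_restrictHom (s : G →* G) (H : Subgroup G) (hH : ∀ x ∈ H, s x ∈ H) (n : ℕ)
    (x : H) : ((restrictHom s H hH)^[n] x : G) = s^[n] x := by
  induction n generalizing x with
  | zero => rfl
  | succ n ih => rw [iterate_succ_apply, iterate_succ_apply, ih, coe_restrictHom]

theorem mem_eventualKernel_restrictHom {s : G →* G} {H : Subgroup G} {hH : ∀ x ∈ H, s x ∈ H}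
    {x : H} : x ∈ eventualKernel (restrictHom s H hH) ↔ (x : G) ∈ eventualKernel s := by
  simp only [mem_eventualKernel, ← coe_iterate_restrictHom s H hH, OneMemClass.coe_eq_one]

theorem card_ker_restrictHom_lt {s : G →* G} {H : Subgroup G} (hH : ∀ x ∈ H, s x ∈ H)
    [Finite s.ker] {a : G} (ha : s a = 1) (haH : a ∉ H) :
    Nat.card (restrictHom s H hH).ker < Nat.card s.ker := by
  let inclusion (x : (restrictHom s H hH).ker) : s.ker := ⟨x, congrArg Subtype.val x.2⟩
  have hinj : Injective inclusion := fun x y hxy =>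
    Subtype.ext (Subtype.ext (congrArg (fun z : s.ker => (z : G)) hxy))
  have := Fintype.ofFinite s.ker
  have := Fintype.ofInjective inclusion hinj
  rw [Nat.card_eq_fintype_card, Nat.card_eq_fintype_card]
  refine Fintype.card_lt_of_injective_of_notMem inclusion hinj (b := ⟨a, ha⟩) ?_
  rintro ⟨x, hx⟩
  have hxa : (x : G) = a := congrArg (fun z : s.ker => (z : G)) hx
  exact haH (hxa ▸ x.1.2)

theorem IsExpansive.restrictHom [TopologicalSpace G] {s : G →* G} (hs : IsExpansive s)
    (H : Subgroup G) (hH : ∀ x ∈ H, s x ∈ H) : IsExpansive (restrictHom s H hH) := by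
  obtain ⟨U, hU, hsep⟩ := hs.exists_separating
  refine ⟨(hs.continuous.comp continuous_subtype_val).subtype_mk _, U.subgroupOf H,
    hU.preimage continuous_subtype_val, fun x hx => Subtype.ext (hsep _ fun n => ?_)⟩
  simpa only [Subgroup.mem_subgroupOf, coe_iterate_restrictHom] using hx n

end Restrict

/-! ### Finite simple quotients -/

section SimpleQuotient

theorem exists_surjective_finSimpleGroup (Q : Type*) [Group Q] [Finite Q] [Nontrivial Q] :
    ∃ (Γ : FinSimpleGroup) (f : Q →* Γ.carrier), Surjective f := by
  induction hn : Nat.card Q using Nat.strong_induction_on generalizing Q with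
  | _ n ih =>
    by_cases hsimple : IsSimpleGroup Q
    · have e : Shrink.{0} Q ≃* Q := Shrink.mulEquiv
      have := e.isSimpleGroup
      have : Finite (Shrink.{0} Q) := Finite.of_equiv _ e.symm.toEquiv
      exact ⟨⟨Shrink.{0} Q⟩, e.symm.toMonoidHom, e.symm.surjective⟩
    · obtain ⟨N, hN, hbot, htop⟩ : ∃ N : Subgroup Q, N.Normal ∧ N ≠ ⊥ ∧ N ≠ ⊤ := by
        by_contra! h
        exact hsimple ⟨fun N hN => or_iff_not_imp_left.2 (h N hN)⟩
      have : Nontrivial (Q ⧸ N) := QuotientGroup.nontrivial_iff.2 htop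
      have hcard : Nat.card (Q ⧸ N) < n := by
        rw [← hn, Subgroup.card_eq_card_quotient_mul_card_subgroup N]
        exact lt_mul_of_one_lt_right Nat.card_pos ((Subgroup.one_lt_card_iff_ne_bot N).2 hbot)
      obtain ⟨Γ, f, hf⟩ := ih _ hcard (Q ⧸ N) rfl
      exact ⟨Γ, f.comp (QuotientGroup.mk' N), hf.comp (QuotientGroup.mk'_surjective N)⟩

variable {G : Type*} [Group G] [TopologicalSpace G]

theorem continuous_of_isOpen_ker [IsTopologicalGroup G] {Γ : Type*} [Group Γ] [TopologicalSpace Γ]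
    [DiscreteTopology Γ] {f : G →* Γ} (hf : IsOpen (f.ker : Set G)) : Continuous f := by
  have : IsTopologicalGroup Γ := {}
  refine continuous_of_continuousAt_one f ?_
  rw [ContinuousAt, map_one, nhds_discrete Γ, Filter.tendsto_pure]
  exact hf.mem_nhds f.ker.one_mem

theorem mem_of_sigmaComponent_eq_top [IsTopologicalGroup G] {s : G →* G}
    (hconn : sigmaComponent s = ⊤) {C : Set G} (hC : IsClosed C)
    (h : ∀ x ∈ eventualKernel s, x ∈ C) (x : G) : x ∈ C :=
  closure_minimal h hC (show x ∈ sigmaComponent s from hconn ▸ Subgroup.mem_top x)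

variable [CompactSpace G]

theorem isOpen_ker_of_comp [T2Space G] {s : G →* G} (hs : Continuous s) (hsurj : Surjective s)
    {Γ : Type*} [Group Γ] {f : G →* Γ} (hf : IsOpen ((f.comp s).ker : Set G)) :
    IsOpen (f.ker : Set G) :=
  (hs.isClosedMap.isQuotientMap hs hsurj).isOpen_preimage.1 hf

theorem eventualKernel_le_ker [T2Space G] {s : G →* G} (hs : Continuous s)
    (hsurj : Surjective s) {Γ : Type*} [Group Γ]
    (h : ∀ f : G →* Γ, Surjective f → IsOpen (f.ker : Set G) → s.ker ≤ f.ker)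
    {f : G →* Γ} (hf : Surjective f) (hopen : IsOpen (f.ker : Set G)) :
    eventualKernel s ≤ f.ker := by
  refine iSup_le fun k => ?_
  induction k generalizing f with
  | zero =>
    intro x hx
    rw [mem_ker_iterateHom, iterate_zero_apply] at hx
    exact hx ▸ f.ker.one_mem
  | succ k ih =>
    -- `f` kills `s.ker`, hence factors through `s`; the factor kills the kernel of `s^[k]`.
    obtain ⟨f', rfl⟩ : ∃ f' : G →* Γ, f'.comp s = f :=
      ⟨s.liftOfSurjective hsurj ⟨f, h f hf hopen⟩, s.liftOfRightInverse_comp _ _ ⟨f, h f hf hopen⟩⟩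
    intro x hx
    exact ih (f := f') (Surjective.of_comp hf) (isOpen_ker_of_comp hs hsurj hopen)
      (mem_ker_iterateHom.2 (mem_ker_iterateHom.1 hx) : s x ∈ (iterateHom s k).ker)

variable [IsTopologicalGroup G] {s : G →* G}

theorem IsExpansive.exists_surjective_finSimpleGroup [Nontrivial G] (hs : IsExpansive s) :
    ∃ (Γ : FinSimpleGroup) (f : G →* Γ.carrier), Surjective f ∧ IsOpen (f.ker : Set G) := by
  obtain ⟨U, _, hU, hsep⟩ := hs.exists_normal_separating
  have hUtop : U ≠ ⊤ := by
    rintro rfl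
    obtain ⟨x, hx⟩ := exists_ne (1 : G)
    exact hx (hsep x fun _ => trivial)
  have : Nontrivial (G ⧸ U) := QuotientGroup.nontrivial_iff.2 hUtop
  have : Finite (G ⧸ U) := Subgroup.quotient_finite_of_isOpen U hU
  obtain ⟨Γ, f, hf⟩ := _root_.exists_surjective_finSimpleGroup (G ⧸ U)
  refine ⟨Γ, f.comp (QuotientGroup.mk' U), hf.comp (QuotientGroup.mk'_surjective U),
    Subgroup.isOpen_mono (fun x hx => ?_) hU⟩
  rw [MonoidHom.mem_ker, MonoidHom.comp_apply, QuotientGroup.mk'_apply,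
    (QuotientGroup.eq_one_iff x).2 hx, map_one]

theorem IsExpansive.exists_surjOn_ker [T2Space G] [Nontrivial G] (hs : IsExpansive s)
    (hsurj : Surjective s) (hconn : sigmaComponent s = ⊤) :
    ∃ (Γ : FinSimpleGroup) (f : G →* Γ.carrier), IsOpen (f.ker : Set G) ∧ SurjOn f s.ker univ := by
  obtain ⟨Γ, f₀, hf₀, hopen₀⟩ := hs.exists_surjective_finSimpleGroup
  obtain ⟨f, hf, hopen, hker⟩ : ∃ f : G →* Γ.carrier,
      Surjective f ∧ IsOpen (f.ker : Set G) ∧ ¬ s.ker ≤ f.ker := by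
    by_contra! h
    have hD := eventualKernel_le_ker hs.continuous hsurj h hf₀ hopen₀
    obtain ⟨γ, hγ⟩ := exists_ne (1 : Γ.carrier)
    obtain ⟨x, rfl⟩ := hf₀ γ
    exact hγ (mem_of_sigmaComponent_eq_top hconn (Subgroup.isClosed_of_isOpen _ hopen₀) hD x)
  refine ⟨Γ, f, hopen, ?_⟩
  have himage : s.ker.map f = ⊤ := (s.normal_ker.map f hf).eq_bot_or_eq_top.resolve_left
    fun hbot => hker ((Subgroup.map_eq_bot_iff _).1 hbot)
  exact fun γ _ => show γ ∈ s.ker.map f from himage ▸ Subgroup.mem_top γ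

end SimpleQuotient

/-! ### The itinerary of a homomorphism -/

section Itinerary

variable {G Γ : Type*} [Group G] [Group Γ]

/-- The coding map `x ↦ (f x, f (s x), f (s² x), …)` into the full shift on `Γ`. -/
def itinerary (s : G →* G) (f : G →* Γ) : G →* (ℕ → Γ) :=
  MonoidHom.pi fun n => f.comp (iterateHom s n)

variable {s : G →* G} {f : G →* Γ}

@[simp]
theorem itinerary_apply (s : G →* G) (f : G →* Γ) (x : G) (n : ℕ) :
    itinerary s f x n = f (s^[n] x) :=
  congrArg f (iterateHom_apply s n x)

theorem mem_ker_itinerary {x : G} : x ∈ (itinerary s f).ker ↔ ∀ n, s^[n] x ∈ f.ker := by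
  simp only [MonoidHom.mem_ker, funext_iff, itinerary_apply, Pi.one_apply]

theorem itinerary_map (s : G →* G) (f : G →* Γ) (x : G) :
    itinerary s f (s x) = shiftHom Γ (itinerary s f x) := by
  funext n
  rw [itinerary_apply, ← iterate_succ_apply, ← itinerary_apply]
  rfl

theorem map_mem_ker_itinerary {x : G} (hx : x ∈ (itinerary s f).ker) :
    s x ∈ (itinerary s f).ker := by
  rw [MonoidHom.mem_ker] at hx ⊢
  rw [itinerary_map, hx, map_one]

theorem exists_itinerary_prefix (hsurj : Surjective s) (hf : SurjOn f s.ker univ) (n : ℕ)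
    (γ : ℕ → Γ) : ∃ x, s^[n] x = 1 ∧ ∀ i < n, f (s^[i] x) = γ i := by
  induction n generalizing γ with
  | zero => exact ⟨1, rfl, fun i hi => absurd hi i.not_lt_zero⟩
  | succ n ih =>
    obtain ⟨y, hy, hγ⟩ := ih fun i => γ (i + 1)
    obtain ⟨x, rfl⟩ := hsurj y
    obtain ⟨a, ha, hfa⟩ := hf (mem_univ (γ 0 * (f x)⁻¹))
    have hsax : s (a * x) = s x := by rw [map_mul, ha, one_mul]
    refine ⟨a * x, by rw [iterate_succ_apply, hsax, hy], ?_⟩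
    rintro (_ | i) hi
    · simp [hfa]
    · rw [iterate_succ_apply, hsax]
      exact hγ i (Nat.lt_of_succ_lt_succ hi)

theorem surjOn_ker_itinerary (hsurj : Surjective s) (hf : SurjOn f s.ker univ) :
    SurjOn s (itinerary s f).ker (itinerary s f).ker := by
  intro x hx
  obtain ⟨y, rfl⟩ := hsurj x
  obtain ⟨a, ha, hfa⟩ := hf (mem_univ (f y)⁻¹)
  have hsay : s (a * y) = s y := by rw [map_mul, ha, one_mul]
  refine ⟨a * y, mem_ker_itinerary.2 ?_, hsay⟩
  rintro (_ | n)
  · simp [MonoidHom.mem_ker, hfa]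
  · rw [iterate_succ_apply, hsay]
    exact mem_ker_itinerary.1 hx n

variable [TopologicalSpace G]

theorem isClosed_ker_itinerary [IsTopologicalGroup G] (hs : Continuous s)
    (hf : IsOpen (f.ker : Set G)) : IsClosed ((itinerary s f).ker : Set G) := by
  have hker : ((itinerary s f).ker : Set G) = ⋂ n, s^[n] ⁻¹' f.ker := by
    ext x
    simp only [SetLike.mem_coe, mem_ker_itinerary, mem_iInter, mem_preimage]
  rw [hker]
  exact isClosed_iInter fun n => (Subgroup.isClosed_of_isOpen _ hf).preimage (hs.iterate n)

variable [TopologicalSpace Γ]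

theorem continuous_itinerary (hs : Continuous s) (hf : Continuous f) :
    Continuous (itinerary s f) :=
  continuous_pi fun n => hf.comp (continuous_iterateHom hs n)

theorem itinerary_surjective [CompactSpace G] [T1Space Γ] (hs : Continuous s)
    (hsurj : Surjective s) (hcont : Continuous f) (hf : SurjOn f s.ker univ) :
    Surjective (itinerary s f) := by
  intro γ
  have hclosed (n : ℕ) : IsClosed {x | ∀ i < n, f (s^[i] x) = γ i} := by
    simp only [ofPred_forall]
    exact isClosed_biInter fun i _ => isClosed_singleton.preimage (hcont.comp (hs.iterate i))
  obtain ⟨x, hx⟩ := IsCompact.nonempty_iInter_of_sequence_nonempty_isCompact_isClosed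
    (fun n => {x | ∀ i < n, f (s^[i] x) = γ i}) (fun n x hx i hi => hx i (Nat.lt_succ_of_lt hi))
    (fun n => (exists_itinerary_prefix hsurj hf n γ).imp fun _ hx => hx.2)
    (hclosed 0).isCompact hclosed
  exact ⟨x, funext fun n => by
    rw [itinerary_apply]
    exact mem_iInter.1 hx (n + 1) n n.lt_succ_self⟩

end Itinerary

section ItineraryKernel

open scoped commutatorElement

variable {G Γ : Type*} [Group G] [Group Γ] [TopologicalSpace G] [IsTopologicalGroup G]
  {s : G →* G} {f : G →* Γ}

/-- The `σ`-identity component of the kernel of `itinerary s f`, as a subgroup of `G`. -/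
def itineraryKerComponent (s : G →* G) (f : G →* Γ) : Subgroup G :=
  (eventualKernel s ⊓ (itinerary s f).ker).topologicalClosure

instance itineraryKerComponent_normal : (itineraryKerComponent s f).Normal :=
  Subgroup.is_normal_topologicalClosure _

theorem isClosed_itineraryKerComponent : IsClosed (itineraryKerComponent s f : Set G) :=
  Subgroup.isClosed_topologicalClosure _

theorem le_itineraryKerComponent :
    eventualKernel s ⊓ (itinerary s f).ker ≤ itineraryKerComponent s f :=
  Subgroup.le_topologicalClosure _

theorem itineraryKerComponent_le (hs : Continuous s) (hf : IsOpen (f.ker : Set G)) :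
    itineraryKerComponent s f ≤ (itinerary s f).ker :=
  Subgroup.topologicalClosure_minimal _ inf_le_right (isClosed_ker_itinerary hs hf)

theorem commutator_mem_itineraryKerComponent (hconn : sigmaComponent s = ⊤) (w : G) {x : G}
    (hx : x ∈ (itinerary s f).ker) :
    ⁅w, x⁆ ∈ itineraryKerComponent s f := by
  refine mem_of_sigmaComponent_eq_top hconn
    (isClosed_itineraryKerComponent.preimage (by simp only [commutatorElement_def]; fun_prop :
      Continuous fun w : G => ⁅w, x⁆)) (fun w hw => le_itineraryKerComponent ?_) w
  exact Subgroup.commutator_le_inf _ _ (Subgroup.commutator_mem_commutator hw hx)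

end ItineraryKernel

/-! ### Nonabelian simple quotients -/

section NonAbelian

open scoped commutatorElement

variable {G Γ : Type*} [Group G] [Group Γ] {s : G →* G} {f : G →* Γ}

theorem mem_cylinder_succ_iff_last {U : Subgroup G} {k : ℕ} {x : G} :
    x ∈ cylinder s U (k + 1) ↔ x ∈ cylinder s U k ∧ s^[k] x ∈ U := by
  simp only [mem_cylinder, Nat.lt_succ_iff_lt_or_eq, or_imp, forall_and, forall_eq]

theorem exists_mem_cylinder_of_not_commute [IsSimpleGroup Γ] (hΓ : ∃ a b : Γ, a * b ≠ b * a)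
    (hsurj : Surjective s) (hf : SurjOn f s.ker univ) {N : Subgroup G} [N.Normal] {n : ℕ}
    (hN : ∀ w : G, ∀ x ∈ cylinder s f.ker n, ⁅w, x⁆ ∈ N) {i : ℕ} (hi : n ≤ i) (γ : Γ) :
    ∃ y ∈ N, s^[i + 1] y = 1 ∧ y ∈ cylinder s f.ker i ∧ f (s^[i] y) = γ := by
  let Y : Subgroup G := (iterateHom s (i + 1)).ker ⊓ cylinder s f.ker i
  let θ : G →* Γ := f.comp (iterateHom s i)
  have hθ (γ : Γ) : ∃ y ∈ Y, θ y = γ := by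
    obtain ⟨y, hy, hγ⟩ := exists_itinerary_prefix hsurj hf (i + 1) (Pi.mulSingle i γ)
    refine ⟨y, ⟨mem_ker_iterateHom.2 hy, mem_cylinder.2 fun j hj => ?_⟩, ?_⟩
    · rw [MonoidHom.mem_ker, hγ j (hj.trans i.lt_succ_self), Pi.mulSingle_eq_of_ne hj.ne]
    · simpa [θ] using hγ i i.lt_succ_self
  have hnormal : ((Y ⊓ N).map θ).Normal :=
    Subgroup.Normal.map inferInstance θ fun γ => (hθ γ).imp fun _ h => h.2
  have himage : (Y ⊓ N).map θ = ⊤ := by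
    refine hnormal.eq_bot_or_eq_top.resolve_left fun hbot => ?_
    obtain ⟨a, b, hab⟩ := hΓ
    obtain ⟨y, hy, rfl⟩ := hθ a
    obtain ⟨z, hz, rfl⟩ := hθ b
    have hmem : θ ⁅y, z⁆ ∈ (Y ⊓ N).map θ := Subgroup.mem_map_of_mem θ
      ⟨Subgroup.commutator_le_left Y Y (Subgroup.commutator_mem_commutator hy hz),
        hN y z (cylinder_antitone s f.ker hi hz.2)⟩
    rw [hbot, Subgroup.mem_bot, map_commutatorElement] at hmem
    exact hab (commutatorElement_eq_one_iff_mul_comm.1 hmem)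
  obtain ⟨y, ⟨⟨hker, hcyl⟩, hyN⟩, hy⟩ : γ ∈ (Y ⊓ N).map θ := himage ▸ Subgroup.mem_top γ
  exact ⟨y, hyN, mem_ker_iterateHom.1 hker, hcyl, by simpa [θ] using hy⟩

theorem mem_of_iterate_eq_one_of_mem_cylinder [IsSimpleGroup Γ] (hΓ : ∃ a b : Γ, a * b ≠ b * a)
    (hsurj : Surjective s) (hf : SurjOn f s.ker univ) {N : Subgroup G} [N.Normal] {n : ℕ}
    (hN : ∀ w : G, ∀ x ∈ cylinder s f.ker n, ⁅w, x⁆ ∈ N)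
    (hle : eventualKernel s ⊓ (itinerary s f).ker ≤ N) {j : ℕ} {i : ℕ} (hi : n ≤ i) {x : G}
    (hx : s^[i + j] x = 1) (hcyl : x ∈ cylinder s f.ker i) : x ∈ N := by
  induction j generalizing i x with
  | zero =>
    refine hle ⟨mem_eventualKernel.2 ⟨i, hx⟩, mem_ker_itinerary.2 fun l => ?_⟩
    rcases lt_or_ge l i with hl | hl
    · exact mem_cylinder.1 hcyl l hl
    · rw [mem_ker_iterateHom.1 (ker_iterateHom_mono s hl (mem_ker_iterateHom.2 hx))]
      exact f.ker.one_mem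
  | succ j ih =>
    obtain ⟨y, hyN, hy, hycyl, hxy⟩ :=
      exists_mem_cylinder_of_not_commute hΓ hsurj hf hN hi (f (s^[i] x))
    have hyj : s^[i + (j + 1)] y = 1 := mem_ker_iterateHom.1
      (ker_iterateHom_mono s (by omega : i + 1 ≤ i + (j + 1)) (mem_ker_iterateHom.2 hy))
    rw [← inv_mul_cancel_right x y]
    refine mul_mem (ih (i := i + 1) (hi.trans i.le_succ) ?_ ?_) hyN
    · rw [Nat.add_right_comm, Nat.add_assoc, iterate_map_mul, iterate_map_inv, hx, hyj,
        inv_one, one_mul]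
    · refine mem_cylinder_succ_iff_last.2 ⟨mul_mem hcyl (inv_mem hycyl), ?_⟩
      rw [MonoidHom.mem_ker, iterate_map_mul, iterate_map_inv, map_mul, map_inv, hxy,
        mul_inv_cancel]

theorem IsExpansive.ker_itinerary_le_of_not_commute [TopologicalSpace G] [IsTopologicalGroup G]
    [CompactSpace G] [IsSimpleGroup Γ] (hΓ : ∃ a b : Γ, a * b ≠ b * a)
    (hs : IsExpansive s) (hsurj : Surjective s) (hconn : sigmaComponent s = ⊤)
    (hopen : IsOpen (f.ker : Set G)) (hf : SurjOn f s.ker univ) :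
    (itinerary s f).ker ≤ itineraryKerComponent s f := by
  obtain ⟨U, _, hU, hsep⟩ := hs.exists_normal_separating
  refine fun x hx => mem_of_forall_mem_sup_cylinder hs.continuous hU hsep
    isClosed_itineraryKerComponent fun k => ?_
  have hUk := isOpen_cylinder hs.continuous hU k
  obtain ⟨n, hn⟩ := exists_cylinder_subset hs.continuous hopen
    (Subgroup.isOpen_mono (le_sup_right : _ ≤ (itinerary s f).ker ⊔ cylinder s U k) hUk)
    fun x hx => (le_sup_left : (itinerary s f).ker ≤ _) (mem_ker_itinerary.2 hx)
  set N := itineraryKerComponent s f ⊔ cylinder s U k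
  have hNopen : IsOpen (N : Set G) := Subgroup.isOpen_mono le_sup_right hUk
  have hN (w : G) (x : G) (hx : x ∈ cylinder s f.ker n) : ⁅w, x⁆ ∈ N := by
    obtain ⟨y, hy, u, hu, rfl⟩ := Subgroup.mem_sup_of_normal_right.1 (hn hx)
    rw [commutatorElement_mul_right_eq_mul_conj]
    have hyN : ⁅w, y⁆ ∈ N := Subgroup.mem_sup_left (commutator_mem_itineraryKerComponent hconn w hy)
    have huN : ⁅w, u⁆ ∈ N := Subgroup.mem_sup_right
      (Subgroup.commutator_le_right ⊤ _ (Subgroup.commutator_mem_commutator trivial hu))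
    simpa only [← mul_assoc] using mul_mem hyN (Subgroup.Normal.conj_mem inferInstance _ huN y)
  have hD : eventualKernel s ⊓ cylinder s f.ker n ≤ N := by
    rintro d ⟨hd, hdn⟩
    obtain ⟨m, hm⟩ := mem_eventualKernel.1 hd
    refine mem_of_iterate_eq_one_of_mem_cylinder hΓ hsurj hf hN
      (le_itineraryKerComponent.trans le_sup_left) (j := m) le_rfl ?_ hdn
    rw [iterate_add_apply, hm, iterate_map_one]
  have hclosed : IsClosed ((cylinder s f.ker n : Set G)ᶜ ∪ N) :=
    (isOpen_cylinder hs.continuous hopen n).isClosed_compl.union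
      (Subgroup.isClosed_of_isOpen N hNopen)
  exact (mem_of_sigmaComponent_eq_top hconn hclosed
    (fun d hd => or_iff_not_imp_left.2 fun hdn => hD ⟨hd, not_not.1 hdn⟩) x).resolve_left
    (not_not.2 (mem_cylinder.2 fun i _ => mem_ker_itinerary.1 hx i))

end NonAbelian

/-! ### Characters of prime exponent -/

section Characters

open Polynomial

/-- The homomorphisms from `G` to the additive group `ZMod p`, as a `ZMod p`-module. -/
abbrev ZModCharacter (G : Type*) [Group G] (p : ℕ) : Type _ := Additive G →+ ZMod p

namespace ZModCharacter

variable {G : Type*} [Group G] {p : ℕ}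

/-- A character as a homomorphism to the multiplicative copy of `ZMod p`. -/
def toHom (χ : ZModCharacter G p) : G →* Multiplicative (ZMod p) :=
  AddMonoidHom.toMultiplicativeRight χ

theorem mem_ker_toHom {χ : ZModCharacter G p} {x : G} : x ∈ χ.toHom.ker ↔ χ (.ofMul x) = 0 :=
  Iff.rfl

theorem mem_ker_itinerary {s : G →* G} {χ : ZModCharacter G p} {x : G} :
    x ∈ (itinerary s χ.toHom).ker ↔ ∀ n, χ (.ofMul (s^[n] x)) = 0 :=
  _root_.mem_ker_itinerary

/-- Precomposition of characters with an endomorphism. -/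
def precomp (s : G →* G) : Module.End (ZMod p) (ZModCharacter G p) where
  toFun χ := χ.comp s.toAdditive
  map_add' _ _ := rfl
  map_smul' _ _ := rfl

@[simp]
theorem precomp_apply (s : G →* G) (χ : ZModCharacter G p) (x : G) :
    precomp s χ (.ofMul x) = χ (.ofMul (s x)) := rfl

theorem precomp_pow_apply (s : G →* G) (n : ℕ) (χ : ZModCharacter G p) (x : G) :
    (precomp s ^ n) χ (.ofMul x) = χ (.ofMul (s^[n] x)) := by
  induction n generalizing x with
  | zero => rfl
  | succ n ih => rw [pow_succ', Module.End.mul_apply, precomp_apply, ih, iterate_succ_apply]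

variable {s : G →* G}

theorem exists_precomp_eq (hsurj : Surjective s) {χ : ZModCharacter G p}
    (h : s.ker ≤ χ.toHom.ker) : ∃ ψ : ZModCharacter G p, precomp s ψ = χ :=
  ⟨MonoidHom.toAdditiveLeft (s.liftOfSurjective hsurj ⟨χ.toHom, h⟩),
    AddMonoidHom.ext fun x => s.liftOfRightInverse_comp_apply _ (rightInverse_surjInv hsurj)
      ⟨χ.toHom, h⟩ x.toMul⟩

theorem aeval_precomp_mem_ker {χ : ZModCharacter G p} {x : G}
    (h : x ∈ (itinerary s χ.toHom).ker) (Q : (ZMod p)[X]) :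
    x ∈ (aeval (precomp s) Q χ).toHom.ker := by
  rw [mem_ker_toHom, aeval_eq_sum_range, LinearMap.sum_apply, AddMonoidHom.finsetSum_apply]
  refine Finset.sum_eq_zero fun n _ => ?_
  rw [LinearMap.smul_apply, AddMonoidHom.smul_apply, precomp_pow_apply, mem_ker_itinerary.1 h n,
    smul_zero]

theorem surjOn_toHom_ker [Fact p.Prime] {χ : ZModCharacter G p} {a : G} (ha : s a = 1)
    (hχ : χ (.ofMul a) ≠ 0) : SurjOn χ.toHom s.ker univ := by
  intro γ _
  refine ⟨a ^ (γ.toAdd / χ (.ofMul a)).val, by simp [MonoidHom.mem_ker, ha], ?_⟩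
  change χ ((γ.toAdd / χ (.ofMul a)).val • .ofMul a) = γ.toAdd
  rw [map_nsmul, nsmul_eq_mul, ZMod.natCast_zmod_val, div_mul_cancel₀ _ hχ]

theorem exists_pow_mul_mem_ker [Fact p.Prime] {χ : ZModCharacter G p} {a : G}
    (hχ : χ (.ofMul a) ≠ 0) (x : G) : ∃ k : ℕ, a ^ k * x ∈ χ.toHom.ker := by
  refine ⟨(-χ (.ofMul x) / χ (.ofMul a)).val, ?_⟩
  rw [mem_ker_toHom, ofMul_mul, ofMul_pow, map_add, map_nsmul, nsmul_eq_mul,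
    ZMod.natCast_zmod_val, div_mul_cancel₀ _ hχ, neg_add_cancel]

theorem exists_aeval_precomp_eq_of_cylinder_le [Fact p.Prime] (hsurj : Surjective s)
    {χ : ZModCharacter G p} {a : G} (ha : s a = 1) (hχ : χ (.ofMul a) ≠ 0) {n : ℕ}
    {ψ : ZModCharacter G p} (h : cylinder s χ.toHom.ker n ≤ ψ.toHom.ker) :
    ∃ Q : (ZMod p)[X], ψ = aeval (precomp s) Q χ := by
  have map_pow_mul (k : ℕ) (x : G) : s (a ^ k * x) = s x := by simp [ha]
  induction n generalizing ψ with
  | zero =>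
    refine ⟨0, ?_⟩
    rw [map_zero]
    exact AddMonoidHom.ext fun x => h (mem_cylinder.2 fun i hi => absurd hi i.not_lt_zero)
  | succ n ih =>
    -- Subtracting a multiple of `χ` makes `ψ` vanish on the kernel of `s`.
    let c := ψ (.ofMul a) / χ (.ofMul a)
    have hker : s.ker ≤ (ψ - c • χ).toHom.ker := by
      intro b hb
      obtain ⟨k, hk⟩ := exists_pow_mul_mem_ker hχ b
      have hψ : a ^ k * b ∈ ψ.toHom.ker :=
        h (mem_cylinder_succ.2 ⟨hk, by rw [map_pow_mul, hb]; exact one_mem _⟩)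
      rw [mem_ker_toHom, ofMul_mul, ofMul_pow, map_add, map_nsmul, nsmul_eq_mul] at hk hψ
      rw [mem_ker_toHom, AddMonoidHom.sub_apply, AddMonoidHom.smul_apply, smul_eq_mul]
      linear_combination hψ - c * hk + k * div_mul_cancel₀ (ψ (.ofMul a)) hχ
    obtain ⟨ψ', hψ'⟩ := exists_precomp_eq hsurj hker
    obtain ⟨Q, rfl⟩ : ∃ Q : (ZMod p)[X], ψ' = aeval (precomp s) Q χ := by
      refine ih fun x hx => ?_
      obtain ⟨y, rfl⟩ := hsurj x
      obtain ⟨k, hχy⟩ := exists_pow_mul_mem_ker hχ y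
      rw [← map_pow_mul k] at hx ⊢
      have hψy := h (mem_cylinder_succ.2 ⟨hχy, hx⟩)
      rw [mem_ker_toHom] at hχy hψy
      rw [mem_ker_toHom, ← precomp_apply, hψ', AddMonoidHom.sub_apply, AddMonoidHom.smul_apply,
        hχy, hψy, smul_zero, sub_zero]
    refine ⟨C c + X * Q, ?_⟩
    simp [hψ']

variable [TopologicalSpace G]

theorem exists_aeval_precomp_eq [IsTopologicalGroup G] [CompactSpace G] [Fact p.Prime]
    (hs : Continuous s) (hsurj : Surjective s) {χ : ZModCharacter G p} {a : G} (ha : s a = 1)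
    (hχ : χ (.ofMul a) ≠ 0) (hopen : IsOpen (χ.toHom.ker : Set G)) {ψ : ZModCharacter G p}
    (hψ : IsOpen (ψ.toHom.ker : Set G)) (h : (itinerary s χ.toHom).ker ≤ ψ.toHom.ker) :
    ∃ Q : (ZMod p)[X], ψ = aeval (precomp s) Q χ := by
  obtain ⟨n, hn⟩ := exists_cylinder_subset hs hopen hψ fun x hx => h (mem_ker_itinerary.2 hx)
  exact exists_aeval_precomp_eq_of_cylinder_le hsurj ha hχ hn

theorem eq_zero_of_precomp_pow_eq [IsTopologicalGroup G] (hsurj : Surjective s)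
    (hconn : sigmaComponent s = ⊤) {χ : ZModCharacter G p} (hopen : IsOpen (χ.toHom.ker : Set G))
    {m k : ℕ} (hmk : m < k) (h : (precomp s ^ k) χ = (precomp s ^ m) χ) : χ = 0 := by
  have hperiod (x : G) : χ (.ofMul (s^[k - m] x)) = χ (.ofMul x) := by
    obtain ⟨y, rfl⟩ := hsurj.iterate m x
    rw [← iterate_add_apply, Nat.sub_add_cancel hmk.le, ← precomp_pow_apply, h, precomp_pow_apply]
  have hperiods (n : ℕ) (x : G) : χ (.ofMul ((s^[k - m])^[n] x)) = χ (.ofMul x) := by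
    induction n generalizing x with
    | zero => rfl
    | succ n ih => rw [iterate_succ_apply, ih, hperiod]
  refine AddMonoidHom.ext fun x => mem_of_sigmaComponent_eq_top hconn
    (Subgroup.isClosed_of_isOpen _ hopen) (fun d hd => ?_) x.toMul
  obtain ⟨n, hn⟩ := mem_eventualKernel.1 hd
  have hzero : (s^[k - m])^[n] d = 1 := by
    rw [← iterate_mul]
    exact mem_ker_iterateHom.1 (ker_iterateHom_mono s
      (Nat.le_mul_of_pos_left n (Nat.sub_pos_of_lt hmk)) (mem_ker_iterateHom.2 hn))
  rw [SetLike.mem_coe, mem_ker_toHom, ← hperiods n, hzero, ofMul_one, map_zero]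

/-- The characters with open kernel that vanish on `H`. -/
def openAnnihilator [IsTopologicalGroup G] (p : ℕ) (H : Subgroup G) :
    Submodule (ZMod p) (ZModCharacter G p) where
  carrier := {χ | IsOpen (χ.toHom.ker : Set G) ∧ H ≤ χ.toHom.ker}
  zero_mem' := ⟨by convert isOpen_univ; exact eq_univ_of_forall fun _ => rfl, fun _ _ => rfl⟩
  add_mem' := by
    have hle (χ ψ : ZModCharacter G p) : χ.toHom.ker ⊓ ψ.toHom.ker ≤ (χ + ψ).toHom.ker :=
      fun x hx => by
        rw [mem_ker_toHom, AddMonoidHom.add_apply, mem_ker_toHom.1 hx.1, mem_ker_toHom.1 hx.2,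
          add_zero]
    exact fun {χ ψ} hχ hψ => ⟨Subgroup.isOpen_mono (hle _ _) (hχ.1.inter hψ.1),
      (le_inf hχ.2 hψ.2).trans (hle _ _)⟩
  smul_mem' := by
    have hle (c : ZMod p) (χ : ZModCharacter G p) : χ.toHom.ker ≤ (c • χ).toHom.ker :=
      fun x hx => by
        rw [mem_ker_toHom, AddMonoidHom.smul_apply, mem_ker_toHom.1 hx, smul_zero]
    exact fun c χ hχ => ⟨Subgroup.isOpen_mono (hle c χ) hχ.1, hχ.2.trans (hle c χ)⟩

theorem openAnnihilator_le_comap_precomp [IsTopologicalGroup G] (hs : Continuous s)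
    {H : Subgroup G} (hH : ∀ x ∈ H, s x ∈ H) :
    openAnnihilator p H ≤ (openAnnihilator p H).comap (precomp s) :=
  fun _ hχ => ⟨hχ.1.preimage hs, fun x hx => hχ.2 (hH x hx)⟩

end ZModCharacter

theorem exists_forall_eq_aeval {k V : Type*} [Field k] [AddCommGroup V] [Module k V]
    {T : Module.End k V} {N : Submodule k V} (hN : N ≤ N.comap T) {P : k[X]} {v : V}
    (hinj : ∀ w ∈ N, aeval T P w = 0 → w = 0) (h : ∀ w ∈ N, ∃ Q : k[X], aeval T P w = aeval T Q v) :
    ∃ e ∈ N, ∀ w ∈ N, ∃ Q : k[X], w = aeval T Q e := by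
  have hcomm (A B : k[X]) (w : V) : aeval T A (aeval T B w) = aeval T B (aeval T A w) := by
    rw [← Module.End.mul_apply, ← Module.End.mul_apply, ← map_mul, ← map_mul, mul_comm]
  have hmem (A : k[X]) {w : V} (hw : w ∈ N) : aeval T A w ∈ N :=
    A.aeval_apply_smul_mem_of_le_comap hw T hN
  let I : Ideal k[X] :=
    { carrier := {Q | ∃ w ∈ N, aeval T P w = aeval T Q v}
      zero_mem' := ⟨0, N.zero_mem, by simp⟩
      add_mem' := by
        rintro A B ⟨w, hw, hA⟩ ⟨z, hz, hB⟩
        exact ⟨w + z, N.add_mem hw hz, by rw [map_add, hA, hB, map_add, LinearMap.add_apply]⟩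
      smul_mem' := by
        rintro A B ⟨w, hw, hB⟩
        exact ⟨aeval T A w, hmem A hw, by
          rw [hcomm, hB, smul_eq_mul, map_mul, Module.End.mul_apply]⟩ }
  obtain ⟨e, he, hPe⟩ : Submodule.IsPrincipal.generator I ∈ I :=
    Submodule.IsPrincipal.generator_mem I
  refine ⟨e, he, fun w hw => ?_⟩
  obtain ⟨Q, hQ⟩ := h w hw
  obtain ⟨A, rfl⟩ := (Submodule.IsPrincipal.mem_iff_generator_dvd I).1 ⟨w, hw, hQ⟩
  refine ⟨A, sub_eq_zero.1 (hinj _ (N.sub_mem hw (hmem A he)) ?_)⟩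
  rw [map_sub, hQ, hcomm, hPe, mul_comm, map_mul, Module.End.mul_apply, sub_self]

end Characters

section Abelian

open Polynomial
open scoped commutatorElement

variable {G : Type*} [Group G]

theorem exists_lt_iterate_inv_mul_mem {s : G →* G} {H N : Subgroup G} [N.Normal]
    (hH : ∀ x ∈ H, s x ∈ H) (hN : ∀ x ∈ N, s x ∈ N) (hfin : N.relIndex H ≠ 0) :
    ∃ m k, m < k ∧ ∀ x ∈ H, (s^[k] x)⁻¹ * s^[m] x ∈ N := by
  have : Finite (H ⧸ N.subgroupOf H) := Nat.finite_of_card_ne_zero hfin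
  let quotientMap : H ⧸ N.subgroupOf H → H ⧸ N.subgroupOf H :=
    QuotientGroup.map _ (N.subgroupOf H) (restrictHom s H hH) fun x hx => hN x hx
  have hmk (n : ℕ) (x : H) : quotientMap^[n] x = ((restrictHom s H hH)^[n] x : H) :=
    (Semiconj.iterate_right (f := QuotientGroup.mk) (fun _ => rfl) n x).symm
  obtain ⟨k, m, hkm, heq⟩ := Finite.exists_ne_map_eq_of_infinite fun n => quotientMap^[n]
  wlog hlt : m < k generalizing m k
  · exact this m k hkm.symm heq.symm (lt_of_le_of_ne (not_lt.1 hlt) hkm)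
  refine ⟨m, k, hlt, fun x hx => ?_⟩
  have hx := congrFun heq (⟨x, hx⟩ : H)
  rw [hmk, hmk, QuotientGroup.eq, Subgroup.mem_subgroupOf] at hx
  simpa only [Subgroup.coe_mul, Subgroup.coe_inv, coe_iterate_restrictHom] using hx

theorem exists_addMonoidHom_ne_zero (k : Type*) {V : Type*} [Field k] [AddCommGroup V] [Module k V]
    {x : V} (hx : x ≠ 0) : ∃ φ : V →+ k, φ x ≠ 0 := by
  by_contra! h
  exact hx ((Module.forall_dual_apply_eq_zero_iff k x).1 fun φ => h φ.toAddMonoidHom)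

theorem exists_addMonoidHom_zmod_ne_zero {p : ℕ} [Fact p.Prime] {A : Type*} [AddCommGroup A]
    (hA : ∀ a : A, p • a = 0) {x : A} (hx : x ≠ 0) : ∃ φ : A →+ ZMod p, φ x ≠ 0 :=
  let _ : Module (ZMod p) A := AddCommGroup.zmodModule hA
  exists_addMonoidHom_ne_zero (ZMod p) hx

open scoped IsMulCommutative in
theorem exists_zmodCharacter_ne_zero {p : ℕ} [Fact p.Prime] {N : Subgroup G} [N.Normal]
    (hcomm : commutator G ≤ N) (hpow : ∀ x, x ^ p ∈ N) {x : G} (hx : x ∉ N) :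
    ∃ χ : ZModCharacter G p, N ≤ χ.toHom.ker ∧ χ (.ofMul x) ≠ 0 := by
  have := Subgroup.Normal.quotient_commutative_iff_commutator_le.2 hcomm
  have hp (a : Additive (G ⧸ N)) : p • a = 0 := by
    obtain ⟨b, hb⟩ := QuotientGroup.mk_surjective a.toMul
    have hbp : a.toMul ^ p = 1 := by
      rw [← hb, ← QuotientGroup.mk_pow, (QuotientGroup.eq_one_iff _).2 (hpow b)]
    exact hbp
  obtain ⟨φ, hφ⟩ := exists_addMonoidHom_zmod_ne_zero hp
    (x := .ofMul (x : G ⧸ N)) (mt (QuotientGroup.eq_one_iff x).1 hx)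
  refine ⟨φ.comp (QuotientGroup.mk' N).toAdditive, fun y hy => ?_, hφ⟩
  have hy1 : (Additive.ofMul (y : G ⧸ N)) = 0 := (QuotientGroup.eq_one_iff y).2 hy
  exact (congrArg φ hy1).trans (map_zero φ)

variable [TopologicalSpace G] [IsTopologicalGroup G] {s : G →* G}

section ItineraryKernel

variable {Γ : Type*}

theorem commutator_le_itineraryKerComponent [CommGroup Γ] {f : G →* Γ}
    (hconn : sigmaComponent s = ⊤) : commutator G ≤ itineraryKerComponent s f := by
  refine Subgroup.commutator_le.2 fun x _ y _ => mem_of_sigmaComponent_eq_top hconn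
    (isClosed_itineraryKerComponent.preimage (by simp only [commutatorElement_def]; fun_prop :
      Continuous fun x : G => ⁅x, y⁆)) (fun d hd => le_itineraryKerComponent ⟨?_, ?_⟩) x
  · exact Subgroup.commutator_le_left (eventualKernel s) ⊤
      (Subgroup.commutator_mem_commutator hd trivial)
  · change itinerary s f ⁅d, y⁆ = 1
    rw [map_commutatorElement]
    exact commutatorElement_eq_one_iff_mul_comm.2 (mul_comm _ _)

theorem pow_mem_itineraryKerComponent [Group Γ] {f : G →* Γ} (hconn : sigmaComponent s = ⊤)
    {n : ℕ} (hΓ : ∀ γ : Γ, γ ^ n = 1) (x : G) : x ^ n ∈ itineraryKerComponent s f := by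
  refine mem_of_sigmaComponent_eq_top hconn
    (isClosed_itineraryKerComponent.preimage (continuous_pow n))
    (fun d hd => le_itineraryKerComponent ⟨pow_mem hd n, mem_ker_itinerary.2 fun i => ?_⟩) x
  rw [MonoidHom.mem_ker, iterate_map_pow, map_pow, hΓ]

theorem map_mem_itineraryKerComponent [Group Γ] {f : G →* Γ} (hs : Continuous s) {x : G}
    (hx : x ∈ itineraryKerComponent s f) : s x ∈ itineraryKerComponent s f :=
  map_mem_closure hs hx fun _ hy =>
    ⟨apply_mem_eventualKernel_iff.2 hy.1, map_mem_ker_itinerary hy.2⟩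

theorem IsExpansive.relIndex_itineraryKerComponent_ne_zero [CompactSpace G] [T2Space G] [Group Γ]
    {f : G →* Γ} (hs : IsExpansive s) (hf : IsOpen (f.ker : Set G)) :
    (itineraryKerComponent s f).relIndex (itinerary s f).ker ≠ 0 := by
  set H := (itinerary s f).ker
  have hH : ∀ x ∈ H, s x ∈ H := fun _ => map_mem_ker_itinerary
  have : CompactSpace H := isCompact_iff_compactSpace.1
    (isClosed_ker_itinerary hs.continuous hf).isCompact
  have hle : sigmaComponent (_root_.restrictHom s H hH) ≤
      (itineraryKerComponent s f).subgroupOf H :=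
    Subgroup.topologicalClosure_minimal _
      (fun x hx => le_itineraryKerComponent ⟨mem_eventualKernel_restrictHom.1 hx, x.2⟩)
      (isClosed_itineraryKerComponent.preimage continuous_subtype_val)
  have := finiteIndex_of_isOpen (hs.restrictHom H hH).isOpen_sigmaComponent
  exact (Subgroup.finiteIndex_of_le hle).index_ne_zero

end ItineraryKernel

variable [CompactSpace G] {p : ℕ} [Fact p.Prime]

open ZModCharacter

theorem IsExpansive.exists_mem_openAnnihilator_ne_zero (hs : IsExpansive s) {H : Subgroup G}
    [H.Normal] (hclosed : IsClosed (H : Set G)) (hcomm : commutator G ≤ H)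
    (hpow : ∀ x, x ^ p ∈ H) {x : G} (hx : x ∉ H) :
    ∃ χ ∈ openAnnihilator p H, χ (.ofMul x) ≠ 0 := by
  obtain ⟨U, _, hU, hsep⟩ := hs.exists_normal_separating
  obtain ⟨k, hk⟩ : ∃ k, x ∉ H ⊔ cylinder s U k := by
    by_contra! h
    exact hx (mem_of_forall_mem_sup_cylinder hs.continuous hU hsep hclosed h)
  obtain ⟨χ, hχ, hχx⟩ := exists_zmodCharacter_ne_zero (hcomm.trans le_sup_left)
    (fun x => Subgroup.mem_sup_left (hpow x)) hk
  exact ⟨χ, ⟨Subgroup.isOpen_mono (le_sup_right.trans hχ) (isOpen_cylinder hs.continuous hU k),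
    le_sup_left.trans hχ⟩, hχx⟩

variable [T2Space G]

theorem IsExpansive.exists_forall_mem_openAnnihilator_eq_aeval (hs : IsExpansive s)
    (hsurj : Surjective s) (hconn : sigmaComponent s = ⊤) {χ : ZModCharacter G p}
    (hopen : IsOpen (χ.toHom.ker : Set G)) {a : G} (ha : s a = 1) (hχ : χ (.ofMul a) ≠ 0) :
    ∃ e ∈ openAnnihilator p (itineraryKerComponent s χ.toHom),
      ∀ ψ ∈ openAnnihilator p (itineraryKerComponent s χ.toHom),
        ∃ Q : (ZMod p)[X], ψ = aeval (precomp s) Q e := by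
  have hinv := openAnnihilator_le_comap_precomp (p := p) hs.continuous
    fun x (hx : x ∈ itineraryKerComponent s χ.toHom) =>
      map_mem_itineraryKerComponent hs.continuous hx
  obtain ⟨m, k, hmk, hperiod⟩ := exists_lt_iterate_inv_mul_mem
    (H := (itinerary s χ.toHom).ker) (N := itineraryKerComponent s χ.toHom)
    (fun _ => map_mem_ker_itinerary) (fun _ => map_mem_itineraryKerComponent hs.continuous)
    (hs.relIndex_itineraryKerComponent_ne_zero hopen)
  have haeval (ψ : ZModCharacter G p) : aeval (precomp s) (X ^ m - X ^ k : (ZMod p)[X]) ψ =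
      (precomp s ^ m) ψ - (precomp s ^ k) ψ := by simp
  refine exists_forall_eq_aeval hinv (P := X ^ m - X ^ k) (v := χ) (fun ψ hψ h => ?_)
    fun ψ hψ => exists_aeval_precomp_eq hs.continuous hsurj ha hχ hopen
      (Polynomial.aeval_apply_smul_mem_of_le_comap hψ _ _ hinv).1 fun x hx => ?_
  · rw [haeval, sub_eq_zero] at h
    exact eq_zero_of_precomp_pow_eq hsurj hconn hψ.1 hmk h.symm
  · have hx0 := hψ.2 (hperiod x hx)
    rw [mem_ker_toHom, ofMul_mul, ofMul_inv, map_add, map_neg, neg_add_eq_zero] at hx0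
    rw [mem_ker_toHom, haeval, AddMonoidHom.sub_apply, precomp_pow_apply, precomp_pow_apply, hx0,
      sub_self]

theorem IsExpansive.exists_zmodCharacter_ker_itinerary_le (hs : IsExpansive s)
    (hsurj : Surjective s) (hconn : sigmaComponent s = ⊤) {χ : ZModCharacter G p}
    (hopen : IsOpen (χ.toHom.ker : Set G)) {a : G} (ha : s a = 1) (hχ : χ (.ofMul a) ≠ 0) :
    ∃ e : ZModCharacter G p, IsOpen (e.toHom.ker : Set G) ∧ e (.ofMul a) ≠ 0 ∧
      (itinerary s e.toHom).ker ≤ itineraryKerComponent s e.toHom := by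
  obtain ⟨e, he, hgen⟩ :=
    hs.exists_forall_mem_openAnnihilator_eq_aeval hsurj hconn hopen ha hχ
  set H := itineraryKerComponent s χ.toHom
  refine ⟨e, he.1, fun hea => hχ ?_, ?_⟩
  · obtain ⟨Q, rfl⟩ := hgen χ ⟨hopen, fun x hx =>
      ZModCharacter.mem_ker_itinerary.1 (itineraryKerComponent_le hs.continuous hopen hx) 0⟩
    refine aeval_precomp_mem_ker (ZModCharacter.mem_ker_itinerary.2 ?_) Q
    rintro (_ | n)
    · exact hea
    · rw [iterate_succ_apply, ha, iterate_map_one, ofMul_one, map_zero]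
  · have hHker : H ≤ (itinerary s e.toHom).ker := fun x hx =>
      ZModCharacter.mem_ker_itinerary.2 fun n => he.2 <|
        MapsTo.iterate (fun _ => map_mem_itineraryKerComponent hs.continuous) n hx
    have hexp (γ : Multiplicative (ZMod p)) : γ ^ p = 1 :=
      ZModModule.char_nsmul_eq_zero p γ.toAdd
    have hkerH : (itinerary s e.toHom).ker ≤ H := by
      intro x hx
      by_contra hxH
      obtain ⟨ψ, hψ, hψx⟩ := hs.exists_mem_openAnnihilator_ne_zero (p := p)
        isClosed_itineraryKerComponent (commutator_le_itineraryKerComponent hconn)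
        (pow_mem_itineraryKerComponent hconn hexp) hxH
      obtain ⟨Q, rfl⟩ := hgen ψ hψ
      exact hψx (aeval_precomp_mem_ker hx Q)
    exact hkerH.trans (Subgroup.topologicalClosure_mono fun x hx =>
      ⟨hx.1, hHker (le_itineraryKerComponent hx)⟩)

theorem IsExpansive.exists_finSimpleGroup_ker_itinerary_le [Nontrivial G] (hs : IsExpansive s)
    (hsurj : Surjective s) (hconn : sigmaComponent s = ⊤) :
    ∃ (Γ : FinSimpleGroup) (f : G →* Γ.carrier), IsOpen (f.ker : Set G) ∧ SurjOn f s.ker univ ∧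
      (itinerary s f).ker ≤ itineraryKerComponent s f := by
  obtain ⟨Γ, f, hopen, hf⟩ := hs.exists_surjOn_ker hsurj hconn
  by_cases hΓ : ∃ a b : Γ.carrier, a * b ≠ b * a
  · exact ⟨Γ, f, hopen, hf, hs.ker_itinerary_le_of_not_commute hΓ hsurj hconn hopen hf⟩
  push Not at hΓ
  let : CommGroup Γ.carrier := { Γ.group with mul_comm := hΓ }
  have : Fact (Nat.card Γ.carrier).Prime := ⟨IsSimpleGroup.prime_card⟩
  set p := Nat.card Γ.carrier
  have hcard : Nat.card (Multiplicative (ZMod p)) = p := by simp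
  let equiv : Γ.carrier ≃* Multiplicative (ZMod p) := mulEquivOfPrimeCardEq (p := p) rfl hcard
  let χ : ZModCharacter G p := MonoidHom.toAdditiveLeft (equiv.toMonoidHom.comp f)
  have hker : χ.toHom.ker = f.ker := by
    ext x
    exact equiv.map_eq_one_iff
  obtain ⟨γ, hγ⟩ := exists_ne (1 : Γ.carrier)
  obtain ⟨a, ha, rfl⟩ := hf (mem_univ γ)
  obtain ⟨e, he, hea, hle⟩ := hs.exists_zmodCharacter_ker_itinerary_le hsurj hconn
    (χ := χ) (hker ▸ hopen) ha (mt equiv.map_eq_one_iff.1 hγ)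
  have : IsSimpleGroup (Multiplicative (ZMod p)) := isSimpleGroup_of_prime_card hcard
  exact ⟨⟨Multiplicative (ZMod p)⟩, e.toHom, he, surjOn_toHom_ker ha hea, hle⟩

end Abelian

/-! ### Series with full shifts as factors -/

section ShiftSeries

instance : Nonempty FinSimpleGroup :=
  ⟨(exists_surjective_finSimpleGroup (Multiplicative (ZMod 2))).choose⟩

variable {G : Type*} [Group G] [TopologicalSpace G]

/-- `X/Y` is the full shift on `Γ`: there is a continuous surjection `X → Γ^ℕ` with kernel `Y`
that turns `s` into the shift. Invariance of `X` is not part of the definition, hence the two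
variables in the equivariance condition. -/
structure IsShiftFactor (s : G →* G) (X Y : Subgroup G) (Γ : FinSimpleGroup) : Prop where
  le : Y ≤ X
  exists_hom : ∃ ψ : X →* (ℕ → Γ.carrier), Continuous ψ ∧ Surjective ψ ∧
    (∀ x y : X, (y : G) = s x → ψ y = shiftHom Γ.carrier (ψ x)) ∧ ψ.ker = Y.subgroupOf X

/-- A descending series `X 0 ≥ X 1 ≥ ⋯ ≥ X r` of closed invariant subgroups whose factors are full
shifts on the finite simple groups `Γ i`. The terms of `X` and `Γ` beyond the indices `r` and
`r - 1` are junk. -/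
structure IsShiftSeries (s : G →* G) (r : ℕ) (X : ℕ → Subgroup G) (Γ : ℕ → FinSimpleGroup) :
    Prop where
  isClosed : ∀ i ≤ r, IsClosed (X i : Set G)
  map_mem : ∀ i ≤ r, ∀ x ∈ X i, s x ∈ X i
  factor : ∀ i < r, IsShiftFactor s (X i) (X (i + 1)) (Γ i)

theorem IsShiftFactor.map_subtype {s : G →* G} {H : Subgroup G} {hH : ∀ x ∈ H, s x ∈ H}
    {X Y : Subgroup H} {Γ : FinSimpleGroup} (h : IsShiftFactor (restrictHom s H hH) X Y Γ) :
    IsShiftFactor s (X.map H.subtype) (Y.map H.subtype) Γ := by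
  obtain ⟨hle, ψ, hcont, hsurj, hequiv, hker⟩ := h
  have hmem (x : X.map H.subtype) : (x : G) ∈ H := Subgroup.map_subtype_le X x.2
  let lift : X.map H.subtype →* H := (X.map H.subtype).subtype.codRestrict H hmem
  have hlift (Z : Subgroup H) (x : X.map H.subtype) : lift x ∈ Z ↔ (x : G) ∈ Z.map H.subtype :=
    (Subgroup.mem_map_iff_mem H.subtype_injective (x := lift x)).symm
  refine ⟨Subgroup.map_mono hle, ψ.comp (lift.codRestrict X fun x => (hlift X x).2 x.2),
    hcont.comp ((continuous_subtype_val.subtype_mk hmem).subtype_mk _), fun γ => ?_,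
    fun x y hxy => hequiv _ _ (Subtype.ext hxy), ?_⟩
  · obtain ⟨x, rfl⟩ := hsurj γ
    exact ⟨⟨x.1.1, x.1, x.2, rfl⟩, rfl⟩
  · rw [← MonoidHom.comap_ker, hker]
    ext x
    exact hlift Y x

theorem IsShiftFactor.comap {H : Type*} [Group H] [TopologicalSpace H] {s : G →* G} {t : H →* H}
    {q : G →* H} (hq : Continuous q) (hqs : ∀ x, q (s x) = t (q x)) {X Y : Subgroup H}
    {Γ : FinSimpleGroup} (h : IsShiftFactor t X Y Γ) (hX : X ≤ q.range) :
    IsShiftFactor s (X.comap q) (Y.comap q) Γ := by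
  obtain ⟨hle, ψ, hcont, hsurj, hequiv, hker⟩ := h
  refine ⟨Subgroup.comap_mono hle, ψ.comp (q.subgroupComap X),
    hcont.comp ((hq.comp continuous_subtype_val).subtype_mk _), fun γ => ?_,
    fun x y hxy => hequiv _ _ ((congrArg q hxy).trans (hqs x)), ?_⟩
  · obtain ⟨x, rfl⟩ := hsurj γ
    obtain ⟨y, hy⟩ := hX x.2
    exact ⟨⟨y, Subgroup.mem_comap.2 (hy ▸ x.2)⟩, congrArg ψ (Subtype.ext hy)⟩
  · rw [← MonoidHom.comap_ker, hker]
    rfl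

namespace IsShiftSeries

variable {s : G →* G} {r : ℕ} {X : ℕ → Subgroup G} {Γ : ℕ → FinSimpleGroup}

theorem cons {W : Subgroup G} {Γ₀ : FinSimpleGroup} (h : IsShiftSeries s r X Γ)
    (hclosed : IsClosed (W : Set G)) (hmap : ∀ x ∈ W, s x ∈ W)
    (hfactor : IsShiftFactor s W (X 0) Γ₀) :
    IsShiftSeries s (r + 1) (fun i => Nat.casesOn i W X) (fun i => Nat.casesOn i Γ₀ Γ) where
  isClosed
    | 0, _ => hclosed
    | i + 1, hi => h.isClosed i (Nat.le_of_succ_le_succ hi)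
  map_mem
    | 0, _ => hmap
    | i + 1, hi => h.map_mem i (Nat.le_of_succ_le_succ hi)
  factor
    | 0, _ => hfactor
    | i + 1, hi => h.factor i (Nat.lt_of_succ_lt_succ hi)

theorem le_zero (h : IsShiftSeries s r X Γ) {i : ℕ} (hi : i ≤ r) : X i ≤ X 0 := by
  induction i with
  | zero => exact le_rfl
  | succ i ih => exact (h.factor i hi).le.trans (ih (Nat.le_of_succ_le hi))

theorem map_subtype {H : Subgroup G} {hH : ∀ x ∈ H, s x ∈ H} {X : ℕ → Subgroup H}
    (hclosed : IsClosed (H : Set G)) (h : IsShiftSeries (restrictHom s H hH) r X Γ) :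
    IsShiftSeries s r (fun i => (X i).map H.subtype) Γ where
  isClosed i hi := hclosed.isClosedEmbedding_subtypeVal.isClosedMap _ (h.isClosed i hi)
  map_mem i hi := by
    rintro _ ⟨x, hx, rfl⟩
    exact ⟨_, h.map_mem i hi x hx, rfl⟩
  factor i hi := (h.factor i hi).map_subtype

theorem comap {H : Type*} [Group H] [TopologicalSpace H] {t : H →* H} {q : G →* H}
    {X : ℕ → Subgroup H} (hq : Continuous q) (hqs : ∀ x, q (s x) = t (q x))
    (h : IsShiftSeries t r X Γ) (hX : X 0 ≤ q.range) :
    IsShiftSeries s r (fun i => (X i).comap q) Γ where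
  isClosed i hi := (h.isClosed i hi).preimage hq
  map_mem i hi x hx := by
    rw [Subgroup.mem_comap, hqs]
    exact h.map_mem i hi _ hx
  factor i hi := (h.factor i hi).comap hq hqs ((h.le_zero hi.le).trans hX)

end IsShiftSeries

theorem sigmaComponent_restrictHom_eq_top [IsTopologicalGroup G] {s : G →* G} {H : Subgroup G}
    (hH : ∀ x ∈ H, s x ∈ H) (hdense : H ≤ (eventualKernel s ⊓ H).topologicalClosure) :
    sigmaComponent (restrictHom s H hH) = ⊤ := by
  refine eq_top_iff.2 fun x _ => ?_
  rw [sigmaComponent, ← SetLike.mem_coe, Subgroup.topologicalClosure_coe, closure_subtype]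
  refine closure_mono ?_ (hdense x.2)
  exact fun y hy => ⟨⟨y, hy.2⟩, mem_eventualKernel_restrictHom.2 hy.1, rfl⟩

theorem map_sigmaComponent_le [IsTopologicalGroup G] {s : G →* G} (hs : Continuous s) (k : ℕ) :
    (sigmaComponent s).map (iterateHom s k) ≤
      (eventualKernel s ⊓ (sigmaComponent s).map (iterateHom s k)).topologicalClosure := by
  rintro _ ⟨y, hy, rfl⟩
  refine map_mem_closure (continuous_iterateHom hs k) hy fun z hz =>
    ⟨?_, z, Subgroup.le_topologicalClosure _ hz, rfl⟩
  obtain ⟨n, hn⟩ := mem_eventualKernel.1 hz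
  refine mem_eventualKernel.2 ⟨n, ?_⟩
  rw [iterateHom_apply, ← iterate_add_apply, add_comm, iterate_add_apply, hn, iterate_map_one]

variable [IsTopologicalGroup G] [CompactSpace G] {s : G →* G}

theorem isShiftFactor_ker_itinerary {Γ : FinSimpleGroup} {f : G →* Γ.carrier} (hs : Continuous s)
    (hsurj : Surjective s) (hopen : IsOpen (f.ker : Set G)) (hf : SurjOn f s.ker univ) :
    IsShiftFactor s ⊤ (itinerary s f).ker Γ := by
  have hcont := continuous_of_isOpen_ker hopen
  refine ⟨le_top, (itinerary s f).comp (Subgroup.subtype ⊤),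
    (continuous_itinerary hs hcont).comp continuous_subtype_val, fun γ => ?_,
    fun x y hxy => (congrArg (itinerary s f) hxy).trans (itinerary_map s f x), ?_⟩
  · obtain ⟨x, hx⟩ := itinerary_surjective hs hsurj hcont hf γ
    exact ⟨⟨x, trivial⟩, hx⟩
  · rw [← MonoidHom.comap_ker]
    rfl

variable [T2Space G]

theorem IsExpansive.exists_isShiftSeries_top_bot (hs : IsExpansive s) (hsurj : Surjective s)
    (hconn : sigmaComponent s = ⊤) :
    ∃ r X Γ, IsShiftSeries s r X Γ ∧ X 0 = ⊤ ∧ X r = ⊥ := by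
  induction hn : Nat.card s.ker using Nat.strong_induction_on generalizing G with
  | _ n ih =>
  rcases subsingleton_or_nontrivial G with hG | hG
  · exact ⟨0, fun _ => ⊤, fun _ => Classical.arbitrary _,
      ⟨fun _ _ => isClosed_univ, fun _ _ _ _ => trivial, fun i hi => absurd hi i.not_lt_zero⟩,
      rfl, Subsingleton.elim _ _⟩
  obtain ⟨Γ₀, f, hf, hfker, hdense⟩ := hs.exists_finSimpleGroup_ker_itinerary_le hsurj hconn
  set N := (itinerary s f).ker
  have hNs : ∀ x ∈ N, s x ∈ N := fun _ => map_mem_ker_itinerary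
  have hNclosed : IsClosed (N : Set G) := isClosed_ker_itinerary hs.continuous hf
  have : CompactSpace N := isCompact_iff_compactSpace.1 hNclosed.isCompact
  have hcard : Nat.card (_root_.restrictHom s N hNs).ker < n := by
    obtain ⟨γ, hγ⟩ := exists_ne (1 : Γ₀.carrier)
    obtain ⟨a, ha, rfl⟩ := hfker (mem_univ γ)
    have := hs.finite_ker
    exact hn ▸ card_ker_restrictHom_lt hNs ha fun haN => hγ (mem_ker_itinerary.1 haN 0)
  have hNsurj : Surjective (_root_.restrictHom s N hNs) := fun x =>
    let ⟨y, hy, hyx⟩ := surjOn_ker_itinerary hsurj hfker x.2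
    ⟨⟨y, hy⟩, Subtype.ext hyx⟩
  obtain ⟨r, X, Γ, hX, htop, hbot⟩ := ih _ hcard (hs.restrictHom N hNs) hNsurj
    (sigmaComponent_restrictHom_eq_top hNs hdense) rfl
  have hX0 : (X 0).map N.subtype = N := by
    rw [htop, ← MonoidHom.range_eq_map, Subgroup.range_subtype]
  have hfactor : IsShiftFactor s ⊤ ((X 0).map N.subtype) Γ₀ := by
    rw [hX0]
    exact isShiftFactor_ker_itinerary hs.continuous hsurj hf hfker
  exact ⟨_, _, _, (hX.map_subtype hNclosed).cons isClosed_univ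
    (fun _ _ => Subgroup.mem_top _) hfactor, rfl,
    (congrArg (Subgroup.map N.subtype) hbot).trans (Subgroup.map_bot _)⟩

theorem IsExpansive.exists_map_sigmaComponent_stable (hs : IsExpansive s) :
    ∃ m, ∀ k, m ≤ k → (sigmaComponent s).map (iterateHom s k) =
      (sigmaComponent s).map (iterateHom s m) := by
  obtain ⟨V, _, hV, hVle, hVmap⟩ := hs.exists_open_le_sigmaComponent
  have := finiteIndex_of_isOpen hV
  refine exists_eq_of_antitone_of_le (V := V) (antitone_nat_of_succ_le fun k => ?_) fun k =>
    (le_map_iterateHom (fun _ => hVmap) k).trans (Subgroup.map_mono hVle)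
  rintro _ ⟨y, hy, rfl⟩
  exact ⟨s y, hs.apply_mem_sigmaComponent_iff.2 hy, by simp⟩

theorem IsExpansive.exists_isShiftSeries (hs : IsExpansive s) :
    ∃ r m X Γ, IsShiftSeries s r X Γ ∧ X 0 = sigmaComponent s ∧ X r ≤ (iterateHom s m).ker := by
  obtain ⟨m, hm⟩ := hs.exists_map_sigmaComponent_stable
  have hcont := continuous_iterateHom hs.continuous m
  set W := (sigmaComponent s).map (iterateHom s m)
  have hWclosed : IsClosed (W : Set G) :=
    ((isClosed_sigmaComponent s).isCompact.image hcont).isClosed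
  have : CompactSpace W := isCompact_iff_compactSpace.1 hWclosed.isCompact
  have hWs : ∀ x ∈ W, s x ∈ W := by
    rintro _ ⟨y, hy, rfl⟩
    exact ⟨s y, hs.apply_mem_sigmaComponent_iff.2 hy, iterateHom_map s m y⟩
  have hWsurj : Surjective (_root_.restrictHom s W hWs) := by
    rintro ⟨x, hx⟩
    obtain ⟨y, hy, rfl⟩ := (hm (m + 1) m.le_succ).ge hx
    exact ⟨⟨_, Subgroup.mem_map_of_mem _ hy⟩, Subtype.ext
      (by simp only [coe_restrictHom, iterateHom_apply, iterate_succ_apply'])⟩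
  obtain ⟨r, X, Γ, hX, htop, hbot⟩ := (hs.restrictHom W hWs).exists_isShiftSeries_top_bot hWsurj
    (sigmaComponent_restrictHom_eq_top hWs (map_sigmaComponent_le hs.continuous m))
  have hX0 : (X 0).map W.subtype = W := by
    rw [htop, ← MonoidHom.range_eq_map, Subgroup.range_subtype]
  refine ⟨r, m, _, Γ, (hX.map_subtype hWclosed).comap hcont (iterateHom_map s m) ?_, ?_, ?_⟩
  · exact hX0.trans_le (Subgroup.map_le_range _ _)
  · rw [hX0]
    exact Subgroup.comap_map_eq_self
      ((le_iSup _ m).trans (Subgroup.le_topologicalClosure (eventualKernel s)))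
  · rw [hbot, Subgroup.map_bot, MonoidHom.comap_bot]

end ShiftSeries

/-! ### Multiplicities of composition factors -/

section FactorMultiplicity

universe u v

variable {Δ : Type*} [Group Δ]

open Classical in
/-- `1` if the groups `S` and `Δ` are isomorphic and `0` otherwise. -/
noncomputable def isoIndicator (Δ S : Type*) [Group Δ] [Group S] : ℕ :=
  if Nonempty (S ≃* Δ) then 1 else 0

open Classical in
theorem isoIndicator_congr {S T : Type*} [Group S] [Group T] (e : S ≃* T) :
    isoIndicator Δ S = isoIndicator Δ T :=
  if_congr ⟨fun ⟨f⟩ => ⟨e.symm.trans f⟩, fun ⟨f⟩ => ⟨e.trans f⟩⟩ rfl rfl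

open Classical in
theorem isoIndicator_le_one (S : Type*) [Group S] : isoIndicator Δ S ≤ 1 :=
  ite_le_one le_rfl zero_le_one

/-- `G` has a composition series in which exactly `n` factors are isomorphic to `Δ`. -/
inductive HasFactorMultiplicity (Δ : Type*) [Group Δ] : (G : Type u) → [Group G] → ℕ → Prop
  | triv (G : Type u) [Group G] [Subsingleton G] : HasFactorMultiplicity Δ G 0
  | step (G : Type u) [Group G] (N : Subgroup G) [N.Normal] [IsSimpleGroup (G ⧸ N)] (n : ℕ)
      (h : HasFactorMultiplicity Δ N n) : HasFactorMultiplicity Δ G (n + isoIndicator Δ (G ⧸ N))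

namespace HasFactorMultiplicity

theorem of_mulEquiv {G : Type u} [Group G] {n : ℕ} (h : HasFactorMultiplicity Δ G n)
    {H : Type v} [Group H] (e : G ≃* H) : HasFactorMultiplicity Δ H n := by
  induction h generalizing H with
  | triv G =>
    have : Subsingleton H := e.symm.toEquiv.subsingleton
    exact triv H
  | step G N n _ ih =>
    have : (N.map e.toMonoidHom).Normal := Subgroup.Normal.map inferInstance _ e.surjective
    let eQuot : G ⧸ N ≃* H ⧸ N.map e.toMonoidHom := QuotientGroup.congr N _ e rfl
    have : IsSimpleGroup (H ⧸ N.map e.toMonoidHom) := eQuot.symm.isSimpleGroup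
    rw [isoIndicator_congr eQuot]
    exact step H _ n (ih (e.subgroupMap N))

theorem of_surjective_simple {G : Type u} [Group G] {S : Type*} [Group S] [IsSimpleGroup S]
    {φ : G →* S} (hφ : Surjective φ) {n : ℕ} (h : HasFactorMultiplicity Δ φ.ker n) :
    HasFactorMultiplicity Δ G (n + isoIndicator Δ S) := by
  let e := QuotientGroup.quotientKerEquivOfSurjective φ hφ
  have : IsSimpleGroup (G ⧸ φ.ker) := e.isSimpleGroup
  rw [← isoIndicator_congr e]
  exact step G _ n h

theorem of_surjective {Q : Type v} [Group Q] {b : ℕ} (hQ : HasFactorMultiplicity Δ Q b)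
    {G : Type u} [Group G] {φ : G →* Q} (hφ : Surjective φ) {a : ℕ}
    (hker : HasFactorMultiplicity Δ φ.ker a) : HasFactorMultiplicity Δ G (a + b) := by
  induction hQ generalizing G with
  | triv Q =>
    have : φ.ker = ⊤ := eq_top_iff.2 fun x _ => Subsingleton.elim _ _
    rw [this] at hker
    exact hker.of_mulEquiv Subgroup.topEquiv
  | step Q N b _ ih =>
    let q := (QuotientGroup.mk' N).comp φ
    have hq : q.ker = N.comap φ := by rw [← MonoidHom.comap_ker, QuotientGroup.ker_mk']
    have hle : φ.ker ≤ N.comap φ := φ.ker_le_comap N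
    have hkerComap : (φ.subgroupComap N).ker = φ.ker.subgroupOf (N.comap φ) := by
      ext x
      exact Subtype.ext_iff
    let e : (φ.subgroupComap N).ker ≃* φ.ker :=
      (MulEquiv.subgroupCongr hkerComap).trans (Subgroup.subgroupOfEquivOfLe hle)
    have hcomap := ih (φ.subgroupComap_surjective_of_surjective N hφ) (hker.of_mulEquiv e.symm)
    rw [← add_assoc]
    exact of_surjective_simple (φ := q) ((QuotientGroup.mk'_surjective N).comp hφ)
      (hcomap.of_mulEquiv (MulEquiv.subgroupCongr hq.symm))

theorem lt_card {G : Type u} [Group G] [hG : Finite G] {n : ℕ}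
    (h : HasFactorMultiplicity Δ G n) : n < Nat.card G := by
  revert hG
  induction h with
  | triv G => exact @fun _ => Nat.card_pos
  | step G N n _ ih =>
    intro _
    have hN : n < Nat.card N := ih
    have hindex : 1 < N.index := Finite.one_lt_card (α := G ⧸ N)
    have hind := isoIndicator_le_one (Δ := Δ) (G ⧸ N)
    have hcard := N.card_mul_index
    nlinarith

end HasFactorMultiplicity

theorem card_lt_of_nontrivial_quotient {G : Type*} [Group G] [Finite G] (N : Subgroup G)
    [Nontrivial (G ⧸ N)] : Nat.card N < Nat.card G := by
  rw [← N.card_mul_index]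
  exact lt_mul_of_one_lt_right Nat.card_pos (Finite.one_lt_card (α := G ⧸ N))

namespace HasFactorMultiplicity

theorem exists_of_finite (Δ : Type*) [Group Δ] (G : Type u) [Group G] [Finite G] :
    ∃ n, HasFactorMultiplicity Δ G n := by
  induction hn : Nat.card G using Nat.strong_induction_on generalizing G with
  | _ n ih =>
    rcases subsingleton_or_nontrivial G with _ | _
    · exact ⟨0, triv G⟩
    · obtain ⟨Γ, f, hf⟩ := exists_surjective_finSimpleGroup G
      have : Nontrivial (G ⧸ f.ker) :=
        (QuotientGroup.quotientKerEquivOfSurjective f hf).toEquiv.nontrivial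
      obtain ⟨c, hc⟩ := ih _ (hn ▸ card_lt_of_nontrivial_quotient f.ker) f.ker rfl
      exact ⟨_, of_surjective_simple hf hc⟩

theorem of_inf_of_not_le {G : Type u} [Group G] {N M : Subgroup G} [N.Normal] [hM : M.Normal]
    [IsSimpleGroup (G ⧸ N)] (hMN : ¬ M ≤ N) {k : ℕ}
    (hk : HasFactorMultiplicity Δ (M ⊓ N : Subgroup G) k) :
    HasFactorMultiplicity Δ M (k + isoIndicator Δ (G ⧸ N)) := by
  let q := QuotientGroup.mk' N
  have hker : (q.comp M.subtype).ker = (M ⊓ N).subgroupOf M := by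
    rw [← MonoidHom.comap_ker, QuotientGroup.ker_mk', Subgroup.inf_subgroupOf_left]
    rfl
  have htop : M.map q = ⊤ :=
    (hM.map q (QuotientGroup.mk'_surjective N)).eq_bot_or_eq_top.resolve_left fun h =>
      hMN (by rwa [Subgroup.map_eq_bot_iff, QuotientGroup.ker_mk'] at h)
  refine of_surjective_simple (φ := q.comp M.subtype) ?_ ?_
  · rw [← MonoidHom.range_eq_top, MonoidHom.range_comp, Subgroup.range_subtype, htop]
  · exact hk.of_mulEquiv ((Subgroup.subgroupOfEquivOfLe inf_le_left).symm.trans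
      (MulEquiv.subgroupCongr hker.symm))

end HasFactorMultiplicity

theorem not_le_of_isSimpleGroup_quotient {G : Type*} [Group G] {N M : Subgroup G} [hN : N.Normal]
    [M.Normal] [IsSimpleGroup (G ⧸ N)] [IsSimpleGroup (G ⧸ M)] (h : N ≠ M) : ¬ M ≤ N := by
  intro hle
  let q := QuotientGroup.mk' M
  rcases (hN.map q (QuotientGroup.mk'_surjective M)).eq_bot_or_eq_top with hbot | htop
  · rw [Subgroup.map_eq_bot_iff, QuotientGroup.ker_mk'] at hbot
    exact h (le_antisymm hbot hle)
  · have hNtop : N = ⊤ := by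
      rw [← Subgroup.comap_map_eq_self (H := N) (f := q) (by rwa [QuotientGroup.ker_mk']), htop,
        Subgroup.comap_top]
    exact QuotientGroup.nontrivial_iff.1 inferInstance hNtop

theorem HasFactorMultiplicity.unique {G : Type u} [Group G] [Finite G] {n m : ℕ}
    (hn : HasFactorMultiplicity Δ G n) (hm : HasFactorMultiplicity Δ G m) : n = m := by
  induction hc : Nat.card G using Nat.strong_induction_on generalizing G n m with
  | _ c ih =>
    cases hn with
    | triv =>
      cases hm with
      | triv => rfl
      | step _ N => exact (not_subsingleton (G ⧸ N) inferInstance).elim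
    | step _ N a ha =>
      cases hm with
      | triv => exact (not_subsingleton (G ⧸ N) inferInstance).elim
      | step _ M b hb =>
        by_cases hNM : N = M
        · subst hNM
          rw [ih _ (hc ▸ card_lt_of_nontrivial_quotient N) ha hb rfl]
        · obtain ⟨k, hk⟩ := exists_of_finite Δ (M ⊓ N : Subgroup G)
          have hM := of_inf_of_not_le (not_le_of_isSimpleGroup_quotient hNM) hk
          have hN := of_inf_of_not_le (not_le_of_isSimpleGroup_quotient (Ne.symm hNM))
            (inf_comm M N ▸ hk)
          have ha' := ih _ (hc ▸ card_lt_of_nontrivial_quotient N) ha hN rfl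
          have hb' := ih _ (hc ▸ card_lt_of_nontrivial_quotient M) hb hM rfl
          lia

theorem HasFactorMultiplicity.fin_pi (Γ : Type*) [Group Γ] [IsSimpleGroup Γ] (k : ℕ) :
    HasFactorMultiplicity Δ (Fin k → Γ) (k * isoIndicator Δ Γ) := by
  induction k with
  | zero =>
    rw [zero_mul]
    exact triv _
  | succ k ih =>
    let φ : (Fin (k + 1) → Γ) →* Γ := Pi.evalMonoidHom _ 0
    let e : (Fin k → Γ) ≃* φ.ker :=
      { toFun := fun x => ⟨Fin.cons 1 x, rfl⟩
        invFun := fun x => Fin.tail x.1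
        left_inv := fun _ => rfl
        right_inv := fun x => Subtype.ext <| by
          conv_rhs => rw [← Fin.cons_self_tail x.1, show x.1 0 = 1 from x.2]
        map_mul' := fun x y => Subtype.ext <| funext <|
          Fin.cases (mul_one 1).symm fun _ => rfl }
    rw [add_mul, one_mul]
    exact of_surjective_simple (φ := φ) (fun γ => ⟨fun _ => γ, rfl⟩) (ih.of_mulEquiv e)

variable {G H Q : Type*} [Group G] [Group H] [Group Q]

/-- The number of composition factors of `G` isomorphic to `Δ`, with the junk value `0` if `G` has
no composition series. -/
noncomputable def factorMultiplicity (Δ G : Type*) [Group Δ] [Group G] : ℕ :=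
  sInf {n | HasFactorMultiplicity Δ G n}

theorem hasFactorMultiplicity_factorMultiplicity (Δ G : Type*) [Group Δ] [Group G] [Finite G] :
    HasFactorMultiplicity Δ G (factorMultiplicity Δ G) :=
  Nat.sInf_mem (HasFactorMultiplicity.exists_of_finite Δ G)

theorem HasFactorMultiplicity.factorMultiplicity_eq [Finite G] {n : ℕ}
    (h : HasFactorMultiplicity Δ G n) : factorMultiplicity Δ G = n :=
  (hasFactorMultiplicity_factorMultiplicity Δ G).unique h

theorem factorMultiplicity_congr (e : G ≃* H) : factorMultiplicity Δ G = factorMultiplicity Δ H :=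
  congrArg sInf (Set.ext fun _ => ⟨fun h => h.of_mulEquiv e, fun h => h.of_mulEquiv e.symm⟩)

theorem factorMultiplicity_map_of_injective {f : G →* H} (hf : Injective f) (D : Subgroup G) :
    factorMultiplicity Δ (D.map f) = factorMultiplicity Δ D :=
  (factorMultiplicity_congr (D.equivMapOfInjective f hf)).symm

theorem factorMultiplicity_lt_card (Δ G : Type*) [Group Δ] [Group G] [Finite G] :
    factorMultiplicity Δ G < Nat.card G :=
  (hasFactorMultiplicity_factorMultiplicity Δ G).lt_card

theorem factorMultiplicity_eq_add [Finite G] {φ : G →* Q} (hφ : Surjective φ) :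
    factorMultiplicity Δ G = factorMultiplicity Δ φ.ker + factorMultiplicity Δ Q := by
  have : Finite Q := Finite.of_surjective φ hφ
  exact ((hasFactorMultiplicity_factorMultiplicity Δ Q).of_surjective hφ
    (hasFactorMultiplicity_factorMultiplicity Δ φ.ker)).factorMultiplicity_eq

theorem abs_factorMultiplicity_sub_sub_le_index [Finite Q] {φ : G →* Q} (hφ : Surjective φ)
    (D : Subgroup G) [hD : D.Normal] [Finite D] :
    |(factorMultiplicity Δ D : ℤ) - factorMultiplicity Δ (φ.ker ⊓ D : Subgroup G) -
      factorMultiplicity Δ Q| ≤ (D.map φ).index := by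
  have : (D.map φ).Normal := hD.map φ hφ
  have himage : factorMultiplicity Δ D =
      factorMultiplicity Δ (φ.subgroupMap D).ker + factorMultiplicity Δ (D.map φ) :=
    factorMultiplicity_eq_add (φ.subgroupMap_surjective D)
  have hker : (φ.subgroupMap D).ker.map D.subtype = φ.ker ⊓ D := by
    rw [Subgroup.ker_subgroupMap, Subgroup.subgroupOf_map_subtype]
  have hquot := factorMultiplicity_eq_add (Δ := Δ) (QuotientGroup.mk'_surjective (D.map φ))
  rw [QuotientGroup.ker_mk'] at hquot
  have hindex : factorMultiplicity Δ (Q ⧸ D.map φ) < (D.map φ).index :=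
    factorMultiplicity_lt_card Δ (Q ⧸ D.map φ)
  rw [← hker, factorMultiplicity_map_of_injective D.subtype_injective, abs_le]
  lia

end FactorMultiplicity

/-! ### Uniqueness of the factors of a series -/

section Prefix

variable {Γ : Type*} [Group Γ]

/-- The first `k` terms of a sequence. -/
def prefixHom (Γ : Type*) [Group Γ] (k : ℕ) : (ℕ → Γ) →* (Fin k → Γ) where
  toFun a i := a i
  map_one' := rfl
  map_mul' _ _ := rfl

theorem iterate_shiftHom_apply (k : ℕ) (a : ℕ → Γ) (n : ℕ) :
    (shiftHom Γ)^[k] a n = a (n + k) := by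
  induction k generalizing a with
  | zero => rfl
  | succ k ih =>
    rw [iterate_succ_apply, ih]
    rfl

theorem eq_one_of_prefixHom_eq_one {k : ℕ} {a : ℕ → Γ} (hprefix : prefixHom Γ k a = 1)
    (hshift : (shiftHom Γ)^[k] a = 1) : a = 1 := by
  funext n
  rcases lt_or_ge n k with hn | hn
  · exact congrFun hprefix ⟨n, hn⟩
  · rw [← Nat.sub_add_cancel hn, ← iterate_shiftHom_apply k a, hshift]
    rfl

theorem exists_prefixHom_eq (k : ℕ) (γ : Fin k → Γ) :
    ∃ a : ℕ → Γ, prefixHom Γ k a = γ ∧ (shiftHom Γ)^[k] a = 1 := by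
  refine ⟨fun n => if h : n < k then γ ⟨n, h⟩ else 1, funext fun i => dif_pos i.2, ?_⟩
  funext n
  rw [iterate_shiftHom_apply]
  exact dif_neg (by lia)

theorem prefixHom_surjective (k : ℕ) : Surjective (prefixHom Γ k) := fun γ =>
  (exists_prefixHom_eq k γ).imp fun _ => And.left

variable {X : Type*} [Group X] {t : X →* X} {ψ : X →* (ℕ → Γ)}

theorem ker_prefixHom_comp_inf_ker_iterateHom (hψ : Semiconj ψ t (shiftHom Γ)) (k : ℕ) :
    ((prefixHom Γ k).comp ψ).ker ⊓ (iterateHom t k).ker = ψ.ker ⊓ (iterateHom t k).ker := by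
  ext x
  refine and_congr_left fun hx => ⟨fun h => eq_one_of_prefixHom_eq_one h ?_, fun h => ?_⟩
  · rw [← (hψ.iterate_right k).eq, mem_ker_iterateHom.1 hx, map_one]
  · exact (congrArg (prefixHom Γ k) h).trans (map_one _)

theorem index_map_ker_iterateHom_le (hψ : Semiconj ψ t (shiftHom Γ)) (hsurj : Surjective ψ)
    {V : Subgroup X} (hVker : V ≤ ψ.ker) (hV : V ≤ V.map t) (hfin : V.relIndex ψ.ker ≠ 0) (k : ℕ) :
    ((iterateHom t k).ker.map ((prefixHom Γ k).comp ψ)).index ≤ V.relIndex ψ.ker := by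
  set φ := (prefixHom Γ k).comp ψ
  let E := ψ.ker.comap (iterateHom t k)
  let W := V.comap (iterateHom t k)
  have hE : Surjective (φ.comp E.subtype) := fun γ => by
    obtain ⟨a, rfl, ha⟩ := exists_prefixHom_eq k γ
    obtain ⟨x, rfl⟩ := hsurj a
    refine ⟨⟨x, ?_⟩, rfl⟩
    rwa [← (hψ.iterate_right k).eq] at ha
  have hW : (W.subgroupOf E).map (φ.comp E.subtype) ≤ (iterateHom t k).ker.map φ := by
    rintro _ ⟨x, hx, rfl⟩
    obtain ⟨v, hv, hvx⟩ := le_map_iterateHom (fun _ => hV) k hx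
    have hφv : φ v = 1 := (congrArg (prefixHom Γ k) (hVker hv)).trans (map_one _)
    refine ⟨x * v⁻¹, MonoidHom.mem_ker.2 ?_, ?_⟩
    · rw [map_mul, map_inv, hvx, E.subtype_apply, mul_inv_cancel]
    · rw [map_mul, map_inv, hφv, inv_one, mul_one]
      rfl
  have hEker : E.map (iterateHom t k) ≤ ψ.ker := Subgroup.map_comap_le _ _
  have hWE : (W.subgroupOf E).index = V.relIndex (E.map (iterateHom t k)) := V.relIndex_comap _ _
  have hdvd := (Subgroup.index_dvd_of_le hW).trans (Subgroup.index_map_dvd _ hE)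
  refine (Nat.le_of_dvd (Nat.pos_of_ne_zero ?_) (hWE ▸ hdvd)).trans
    (Subgroup.relIndex_le_of_le_right hEker hfin)
  exact mt (Subgroup.relIndex_eq_zero_of_le_right hEker) hfin

end Prefix

theorem eq_of_abs_sub_mul_le {f : ℕ → ℤ} {a b C D : ℤ} (ha : ∀ k : ℕ, |f k - k * a| ≤ C)
    (hb : ∀ k : ℕ, |f k - k * b| ≤ D) : a = b := by
  have hbound (k : ℕ) : k * |a - b| ≤ C + D := by
    calc (k : ℤ) * |a - b| = |(f k - k * b) - (f k - k * a)| := by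
          rw [← Nat.abs_cast k, ← abs_mul, Nat.abs_cast]
          ring_nf
      _ ≤ |f k - k * b| + |f k - k * a| := abs_sub _ _
      _ ≤ C + D := by linarith [ha k, hb k]
  by_contra! hne
  have hpos : 1 ≤ |a - b| := Int.one_le_abs (sub_ne_zero.2 hne)
  have hCD : (C + D).toNat + 1 ≤ C + D := by
    calc ((C + D).toNat + 1 : ℤ) ≤ ((C + D).toNat + 1 : ℕ) * |a - b| := by
          push_cast
          exact le_mul_of_one_le_right (by positivity) hpos
      _ ≤ C + D := hbound _
  lia

section Growth

variable {Δ : Type*} [Group Δ]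

theorem IsExpansive.exists_le_map_relIndex_ne_zero {X : Type*} [Group X] [TopologicalSpace X]
    [IsTopologicalGroup X] [CompactSpace X] [T2Space X] {t : X →* X} (ht : IsExpansive t)
    {N : Subgroup X} (hN : IsClosed (N : Set X)) (hNt : ∀ x ∈ N, t x ∈ N) :
    ∃ V ≤ N, V ≤ V.map t ∧ V.relIndex N ≠ 0 := by
  have : CompactSpace N := isCompact_iff_compactSpace.1 hN.isCompact
  obtain ⟨V, _, hVopen, -, hV⟩ := (ht.restrictHom N hNt).exists_open_le_sigmaComponent
  refine ⟨V.map N.subtype, Subgroup.map_subtype_le V, ?_, ?_⟩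
  · rintro _ ⟨v, hv, rfl⟩
    obtain ⟨w, hw, rfl⟩ := hV hv
    exact ⟨w, Subgroup.mem_map_of_mem _ hw, rfl⟩
  · rw [Subgroup.relIndex, Subgroup.subgroupOf,
      Subgroup.comap_map_eq_self_of_injective N.subtype_injective]
    exact (finiteIndex_of_isOpen hVopen).index_ne_zero

theorem IsExpansive.exists_abs_factorMultiplicity_sub_le {X : Type*} [Group X] [TopologicalSpace X]
    [IsTopologicalGroup X] [CompactSpace X] [T2Space X] {t : X →* X} (ht : IsExpansive t)
    {Γ : FinSimpleGroup} {ψ : X →* (ℕ → Γ.carrier)} (hcont : Continuous ψ) (hsurj : Surjective ψ)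
    (hψ : Semiconj ψ t (shiftHom Γ.carrier)) :
    ∃ C : ℤ, ∀ k : ℕ, |(factorMultiplicity Δ (iterateHom t k).ker : ℤ) -
      factorMultiplicity Δ (ψ.ker ⊓ (iterateHom t k).ker : Subgroup X) -
        k * isoIndicator Δ Γ.carrier| ≤ C := by
  have hclosed : IsClosed (ψ.ker : Set X) := isClosed_singleton.preimage hcont
  have hker : ∀ x ∈ ψ.ker, t x ∈ ψ.ker := fun x hx => by
    rw [MonoidHom.mem_ker, hψ.eq, hx, map_one]
  obtain ⟨V, hVker, hV, hfin⟩ := ht.exists_le_map_relIndex_ne_zero hclosed hker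
  refine ⟨V.relIndex ψ.ker, fun k => ?_⟩
  have := ht.finite_ker_iterateHom k
  have hbound := abs_factorMultiplicity_sub_sub_le_index (Δ := Δ) (φ := (prefixHom _ k).comp ψ)
    ((prefixHom_surjective k).comp hsurj) (iterateHom t k).ker
  rw [ker_prefixHom_comp_inf_ker_iterateHom hψ,
    (HasFactorMultiplicity.fin_pi Γ.carrier k).factorMultiplicity_eq, Nat.cast_mul] at hbound
  exact hbound.trans (mod_cast index_map_ker_iterateHom_le hψ hsurj hVker hV hfin k)

theorem map_subtype_ker_iterateHom_restrictHom {G : Type*} [Group G] {s : G →* G}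
    {X : Subgroup G} (hX : ∀ x ∈ X, s x ∈ X) (k : ℕ) :
    (iterateHom (restrictHom s X hX) k).ker.map X.subtype = X ⊓ (iterateHom s k).ker := by
  have hker : (iterateHom (restrictHom s X hX) k).ker = (iterateHom s k).ker.subgroupOf X := by
    ext x
    rw [mem_ker_iterateHom, Subgroup.mem_subgroupOf, mem_ker_iterateHom,
      ← coe_iterate_restrictHom s X hX, OneMemClass.coe_eq_one]
  rw [hker, Subgroup.subgroupOf_map_subtype, inf_comm]

theorem IsShiftFactor.exists_abs_factorMultiplicity_sub_le {G : Type*} [Group G]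
    [TopologicalSpace G] [IsTopologicalGroup G] [CompactSpace G] [T2Space G] {s : G →* G}
    (hs : IsExpansive s) {X Y : Subgroup G} {Γ : FinSimpleGroup} (h : IsShiftFactor s X Y Γ)
    (hX : IsClosed (X : Set G)) (hXs : ∀ x ∈ X, s x ∈ X) :
    ∃ C : ℤ, ∀ k : ℕ, |(factorMultiplicity Δ (X ⊓ (iterateHom s k).ker : Subgroup G) : ℤ) -
      factorMultiplicity Δ (Y ⊓ (iterateHom s k).ker : Subgroup G) -
        k * isoIndicator Δ Γ.carrier| ≤ C := by
  have : CompactSpace X := isCompact_iff_compactSpace.1 hX.isCompact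
  obtain ⟨hle, ψ, hcont, hsurj, hequiv, hker⟩ := h
  have hψ : Semiconj ψ (restrictHom s X hXs) (shiftHom Γ.carrier) := fun x => hequiv _ _ rfl
  obtain ⟨C, hC⟩ :=
    (hs.restrictHom X hXs).exists_abs_factorMultiplicity_sub_le (Δ := Δ) hcont hsurj hψ
  refine ⟨C, fun k => ?_⟩
  have hXk := map_subtype_ker_iterateHom_restrictHom hXs k
  have hYk : (ψ.ker ⊓ (iterateHom (restrictHom s X hXs) k).ker).map X.subtype =
      Y ⊓ (iterateHom s k).ker := by
    rw [Subgroup.map_inf _ _ _ X.subtype_injective, hXk, hker, Subgroup.subgroupOf_map_subtype,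
      inf_of_le_left hle, ← inf_assoc, inf_of_le_left hle]
  rw [← hXk, ← hYk, factorMultiplicity_map_of_injective X.subtype_injective,
    factorMultiplicity_map_of_injective X.subtype_injective]
  exact hC k

variable {G : Type*} [Group G] [TopologicalSpace G] [IsTopologicalGroup G] [CompactSpace G]
  [T2Space G] {s : G →* G} {r m : ℕ} {X : ℕ → Subgroup G} {Γ : ℕ → FinSimpleGroup}

theorem IsShiftSeries.exists_abs_factorMultiplicity_sub_le (hs : IsExpansive s)
    (h : IsShiftSeries s r X Γ) {j : ℕ} (hj : j ≤ r) :
    ∃ C : ℤ, ∀ k : ℕ, |(factorMultiplicity Δ (X 0 ⊓ (iterateHom s k).ker : Subgroup G) : ℤ) -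
      factorMultiplicity Δ (X j ⊓ (iterateHom s k).ker : Subgroup G) -
        k * ∑ i ∈ Finset.range j, (isoIndicator Δ (Γ i).carrier : ℤ)| ≤ C := by
  induction j with
  | zero => exact ⟨0, fun k => by simp⟩
  | succ j ih =>
    obtain ⟨C, hC⟩ := ih (Nat.le_of_succ_le hj)
    obtain ⟨D, hD⟩ := (h.factor j hj).exists_abs_factorMultiplicity_sub_le (Δ := Δ) hs
      (h.isClosed j (Nat.le_of_succ_le hj)) (h.map_mem j (Nat.le_of_succ_le hj))
    refine ⟨C + D, fun k => ?_⟩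
    rw [Finset.sum_range_succ]
    refine le_trans (le_of_eq_of_le (congrArg _ ?_) (abs_add_le _ _)) (add_le_add (hC k) (hD k))
    ring

theorem IsShiftSeries.exists_abs_factorMultiplicity_ker_sub_le (hs : IsExpansive s)
    (h : IsShiftSeries s r X Γ) (htop : eventualKernel s ≤ X 0)
    (hbot : X r ≤ (iterateHom s m).ker) :
    ∃ C : ℤ, ∀ k : ℕ, |(factorMultiplicity Δ (iterateHom s k).ker : ℤ) -
      k * ∑ i ∈ Finset.range r, (isoIndicator Δ (Γ i).carrier : ℤ)| ≤ C := by
  obtain ⟨C, hC⟩ := h.exists_abs_factorMultiplicity_sub_le (Δ := Δ) hs le_rfl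
  have := hs.finite_ker_iterateHom m
  refine ⟨C + Nat.card (iterateHom s m).ker, fun k => ?_⟩
  have hle : X r ⊓ (iterateHom s k).ker ≤ (iterateHom s m).ker := inf_le_left.trans hbot
  have : Finite (X r ⊓ (iterateHom s k).ker : Subgroup G) :=
    Finite.of_injective _ (Subgroup.inclusion_injective hle)
  have hlast := (factorMultiplicity_lt_card Δ (X r ⊓ (iterateHom s k).ker : Subgroup G)).le.trans
    (Subgroup.card_le_of_le hle)
  have hCk := hC k
  rw [inf_of_le_right ((le_iSup _ k).trans htop), abs_le] at hCk
  rw [abs_le]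
  lia

end Growth

open Classical in
theorem exists_equiv_of_sum_isoIndicator_eq {ι κ : Type*} [Fintype ι] [Fintype κ]
    {Γ : ι → FinSimpleGroup} {Γ' : κ → FinSimpleGroup}
    (h : ∀ Δ : FinSimpleGroup, ∑ i, isoIndicator Δ.carrier (Γ i).carrier =
      ∑ j, isoIndicator Δ.carrier (Γ' j).carrier) :
    ∃ e : ι ≃ κ, ∀ i, Nonempty ((Γ i).carrier ≃* (Γ' (e i)).carrier) := by
  let isoSetoid : Setoid FinSimpleGroup :=
    { r A B := Nonempty (A.carrier ≃* B.carrier)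
      iseqv := ⟨fun _ => ⟨.refl _⟩, fun ⟨e⟩ => ⟨e.symm⟩, fun ⟨e⟩ ⟨f⟩ => ⟨e.trans f⟩⟩ }
  have hfiber (q : Quotient isoSetoid) : Nonempty ({i // ⟦Γ i⟧ = q} ≃ {j // ⟦Γ' j⟧ = q}) := by
    induction q using Quotient.inductionOn with
    | _ Δ =>
      rw [← Fintype.card_eq, Fintype.card_subtype, Fintype.card_subtype, Finset.card_filter,
        Finset.card_filter]
      simp only [Quotient.eq]
      exact h Δ
  let e (q : Quotient isoSetoid) := (hfiber q).some
  exact ⟨Equiv.ofFiberEquiv e, fun i => Quotient.exact (Equiv.ofFiberEquiv_map e i).symm⟩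

theorem IsShiftSeries.unique {G : Type*} [Group G] [TopologicalSpace G] [IsTopologicalGroup G]
    [CompactSpace G] [T2Space G] {s : G →* G} (hs : IsExpansive s) {r r' m m' : ℕ}
    {X X' : ℕ → Subgroup G} {Γ Γ' : ℕ → FinSimpleGroup}
    (h : IsShiftSeries s r X Γ) (htop : eventualKernel s ≤ X 0) (hbot : X r ≤ (iterateHom s m).ker)
    (h' : IsShiftSeries s r' X' Γ') (htop' : eventualKernel s ≤ X' 0)
    (hbot' : X' r' ≤ (iterateHom s m').ker) :
    r' = r ∧ ∃ e : Fin r ≃ Fin r', ∀ i : Fin r, Nonempty ((Γ i).carrier ≃* (Γ' (e i)).carrier) := by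
  have hsum (Δ : FinSimpleGroup) : ∑ i : Fin r, isoIndicator Δ.carrier (Γ i).carrier =
      ∑ i : Fin r', isoIndicator Δ.carrier (Γ' i).carrier := by
    obtain ⟨C, hC⟩ :=
      h.exists_abs_factorMultiplicity_ker_sub_le (Δ := Δ.carrier) hs htop hbot
    obtain ⟨C', hC'⟩ :=
      h'.exists_abs_factorMultiplicity_ker_sub_le (Δ := Δ.carrier) hs htop' hbot'
    rw [← Finset.sum_range fun i => isoIndicator Δ.carrier (Γ i).carrier,
      ← Finset.sum_range fun i => isoIndicator Δ.carrier (Γ' i).carrier]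
    exact_mod_cast eq_of_abs_sub_mul_le hC hC'
  obtain ⟨e, he⟩ := exists_equiv_of_sum_isoIndicator_eq hsum
  exact ⟨(Fin.equiv_iff_eq.1 ⟨e⟩).symm, e, he⟩

/-! ### The endomorphism `g ↦ g^σ` of a Galois group -/

section GaloisTopology

variable {F L : Type*} [Field F] [Field L] [Algebra F L]

theorem mem_fixingSubgroup_adjoin_iff {S : Set L} {g : L ≃ₐ[F] L} :
    g ∈ (IntermediateField.adjoin F S).fixingSubgroup ↔ ∀ x ∈ S, g x = x :=
  (IntermediateField.mem_fixingSubgroup_iff _ _).trans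
    (IntermediateField.forall_mem_adjoin_smul_eq_self_iff F g)

theorem eq_one_of_forall_apply_eq {S : Set L} (hS : IntermediateField.adjoin F S = ⊤)
    {g : L ≃ₐ[F] L} (hg : ∀ x ∈ S, g x = x) : g = 1 := by
  rwa [← mem_fixingSubgroup_adjoin_iff, hS, IntermediateField.fixingSubgroup_top,
    Subgroup.mem_bot] at hg

theorem continuous_of_forall_eventually_apply_eq {G : Type*} [Group G] [TopologicalSpace G]
    [IsTopologicalGroup G] (φ : G →* (L ≃ₐ[F] L))
    (hφ : ∀ x, ∀ᶠ g in nhds 1, φ g x = x) : Continuous φ := by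
  refine continuous_of_continuousAt_one φ fun A hA => ?_
  rw [map_one] at hA
  obtain ⟨E, hE, hEA⟩ := (krullTopology_mem_nhds_one_iff F L A).1 hA
  obtain ⟨S, hS⟩ := IntermediateField.essFiniteType_iff.1
    (inferInstance : Algebra.EssFiniteType F E)
  rw [Filter.mem_map]
  filter_upwards [(Filter.eventually_all_finset S).2 fun x _ => hφ x] with g hg
  exact hEA (hS ▸ mem_fixingSubgroup_adjoin_iff.2 hg)

theorem eventually_apply_eq [Algebra.IsIntegral F L] (x : L) :
    ∀ᶠ g : L ≃ₐ[F] L in nhds 1, g x = x :=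
  (stabilizer_isOpen_of_isIntegral x).mem_nhds (one_mem (MulAction.stabilizer (L ≃ₐ[F] L) x))

end GaloisTopology

section GaloisSigma

variable {F L : Type*} [Field F] [Field L] [Algebra F L] [IsGalois F L] {σ : L →+* L}

/- The polynomial `σ(minpoly x)` has coefficients in `F` and vanishes at `g (σ x)`; it splits over
`σ(L)` since the minimal polynomial of `x` splits over `L`. -/
theorem exists_map_eq_apply_map
    (hσ : ∀ x : F, ∃ y : F, σ (algebraMap F L x) = algebraMap F L y)
    (g : L ≃ₐ[F] L) (x : L) : ∃ y, σ y = g (σ x) := by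
  have fixes_coeffs : (g : L →+* L).comp (σ.comp (algebraMap F L)) = σ.comp (algebraMap F L) := by
    ext a
    obtain ⟨y, hy⟩ := hσ a
    simp [hy]
  have is_root : (minpoly F x).eval₂ (σ.comp (algebraMap F L)) (g (σ x)) = 0 := by
    have := Polynomial.hom_eval₂ (minpoly F x) (algebraMap F L) ((g : L →+* L).comp σ) x
    rw [← Polynomial.aeval_def, minpoly.aeval, map_zero, RingHom.comp_assoc, fixes_coeffs] at this
    exact this.symm
  rw [← Polynomial.eval₂_map, (Normal.splits inferInstance x).eq_prod_roots_of_monic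
    ((minpoly.monic (Algebra.IsIntegral.isIntegral x)).map _), Polynomial.eval₂_multiset_prod,
    Multiset.prod_eq_zero_iff] at is_root
  simp only [Multiset.map_map, Multiset.mem_map, Function.comp, Polynomial.eval₂_sub,
    Polynomial.eval₂_X, Polynomial.eval₂_C] at is_root
  obtain ⟨r, -, hr⟩ := is_root
  exact ⟨r, (sub_eq_zero.1 hr).symm⟩

theorem exists_algEquiv_map_apply_eq
    (hσ : ∀ x : F, ∃ y : F, σ (algebraMap F L x) = algebraMap F L y) (g : L ≃ₐ[F] L) :
    ∃ h : L ≃ₐ[F] L, ∀ x, σ (h x) = g (σ x) := by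
  choose f hf using exists_map_eq_apply_map hσ
  exact ⟨{
    toFun := f g
    invFun := f g⁻¹
    left_inv := fun x => σ.injective (by rw [hf, hf]; exact g.symm_apply_apply _)
    right_inv := fun x => σ.injective (by rw [hf, hf]; exact g.apply_symm_apply _)
    map_mul' := fun x y => σ.injective (by simp only [hf, map_mul])
    map_add' := fun x y => σ.injective (by simp only [hf, map_add])
    commutes' := fun a => σ.injective <| by
      obtain ⟨y, hy⟩ := hσ a
      rw [hf, hy, g.commutes] }, hf g⟩

variable (hσ : ∀ x : F, ∃ y : F, σ (algebraMap F L x) = algebraMap F L y)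

/-- The endomorphism `g ↦ g^σ` of the Galois group, determined by `σ ∘ g^σ = g ∘ σ`. -/
noncomputable def galoisSigma : (L ≃ₐ[F] L) →* (L ≃ₐ[F] L) where
  toFun g := (exists_algEquiv_map_apply_eq hσ g).choose
  map_one' := AlgEquiv.ext fun x =>
    σ.injective ((exists_algEquiv_map_apply_eq hσ 1).choose_spec x)
  map_mul' g h := AlgEquiv.ext fun x => σ.injective <| by
    rw [(exists_algEquiv_map_apply_eq hσ (g * h)).choose_spec, AlgEquiv.mul_apply,
      AlgEquiv.mul_apply, (exists_algEquiv_map_apply_eq hσ g).choose_spec,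
      (exists_algEquiv_map_apply_eq hσ h).choose_spec]

theorem map_galoisSigma_apply (g : L ≃ₐ[F] L) (x : L) : σ (galoisSigma hσ g x) = g (σ x) :=
  (exists_algEquiv_map_apply_eq hσ g).choose_spec x

theorem eq_galoisSigma_of_forall_map_apply {g h : L ≃ₐ[F] L} (hgh : ∀ x, σ (h x) = g (σ x)) :
    h = galoisSigma hσ g :=
  AlgEquiv.ext fun x => σ.injective ((hgh x).trans (map_galoisSigma_apply hσ g x).symm)

theorem iterate_map_iterate_galoisSigma_apply (n : ℕ) (g : L ≃ₐ[F] L) (x : L) :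
    σ^[n] ((galoisSigma hσ)^[n] g x) = g (σ^[n] x) := by
  induction n generalizing g x with
  | zero => rfl
  | succ n ih =>
    rw [iterate_succ_apply, iterate_succ_apply', map_galoisSigma_apply, ih, ← iterate_succ_apply]

theorem iterate_galoisSigma_apply_eq_iff {n : ℕ} {g : L ≃ₐ[F] L} {x : L} :
    (galoisSigma hσ)^[n] g x = x ↔ g (σ^[n] x) = σ^[n] x := by
  rw [← iterate_map_iterate_galoisSigma_apply hσ]
  exact (σ.injective.iterate n).eq_iff.symm

theorem galoisSigma_apply_eq_iff {g : L ≃ₐ[F] L} {x : L} :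
    galoisSigma hσ g x = x ↔ g (σ x) = σ x :=
  iterate_galoisSigma_apply_eq_iff hσ (n := 1)

theorem mem_fixingSubgroup_adjoin_image_iterate_iff {n : ℕ} {M : IntermediateField F L}
    {g : L ≃ₐ[F] L} :
    g ∈ (IntermediateField.adjoin F (σ^[n] '' (M : Set L))).fixingSubgroup ↔
      (galoisSigma hσ)^[n] g ∈ M.fixingSubgroup := by
  rw [mem_fixingSubgroup_adjoin_iff, forall_mem_image, IntermediateField.mem_fixingSubgroup_iff]
  exact forall₂_congr fun x _ => (iterate_galoisSigma_apply_eq_iff hσ).symm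

theorem continuous_galoisSigma : Continuous (galoisSigma hσ) := by
  refine continuous_of_forall_eventually_apply_eq _ fun x => ?_
  filter_upwards [eventually_apply_eq (σ x)] with g hg
  exact (galoisSigma_apply_eq_iff hσ).2 hg

theorem isExpansive_galoisSigma (hfg : ∃ A : Finset L,
    IntermediateField.adjoin F (⋃ n : ℕ, (⇑σ)^[n] '' (A : Set L)) = ⊤) :
    IsExpansive (galoisSigma hσ) := by
  obtain ⟨A, hA⟩ := hfg
  have : FiniteDimensional F (IntermediateField.adjoin F (A : Set L)) :=
    IntermediateField.finiteDimensional_adjoin fun x _ => Algebra.IsIntegral.isIntegral x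
  refine ⟨continuous_galoisSigma hσ, (IntermediateField.adjoin F (A : Set L)).fixingSubgroup,
    IntermediateField.fixingSubgroup_isOpen _, fun g hg => ?_⟩
  refine eq_one_of_forall_apply_eq hA fun y hy => ?_
  obtain ⟨n, x, hx, rfl⟩ := mem_iUnion.1 hy
  exact (iterate_galoisSigma_apply_eq_iff hσ).1 (mem_fixingSubgroup_adjoin_iff.1 (hg n) x hx)

theorem galoisSigma_mem_fixingSubgroup {M : IntermediateField F L} (hM : ∀ x ∈ M, σ x ∈ M)
    {g : L ≃ₐ[F] L} (hg : g ∈ M.fixingSubgroup) : galoisSigma hσ g ∈ M.fixingSubgroup := by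
  rw [IntermediateField.mem_fixingSubgroup_iff] at *
  exact fun x hx => (galoisSigma_apply_eq_iff hσ).2 (hg _ (hM x hx))

theorem map_mem_fixedField {X : Subgroup (L ≃ₐ[F] L)} (hX : ∀ g ∈ X, galoisSigma hσ g ∈ X)
    {x : L} (hx : x ∈ IntermediateField.fixedField X) : σ x ∈ IntermediateField.fixedField X := by
  rw [IntermediateField.mem_fixedField_iff] at *
  exact fun g hg => (galoisSigma_apply_eq_iff hσ).1 (hx _ (hX g hg))

end GaloisSigma

/-! ### Galois groups with full shifts as quotients -/

section GaloisCorrespondence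

variable {F L : Type*} [Field F] [Field L] [Algebra F L] [IsGalois F L]

theorem fixingSubgroup_fixedField_of_isClosed {H : Subgroup (L ≃ₐ[F] L)}
    (hH : IsClosed (H : Set (L ≃ₐ[F] L))) :
    (IntermediateField.fixedField H).fixingSubgroup = H :=
  InfiniteGalois.fixingSubgroup_fixedField ⟨H, hH⟩

theorem le_of_fixingSubgroup_le {M N : IntermediateField F L}
    (h : N.fixingSubgroup ≤ M.fixingSubgroup) : M ≤ N := by
  rwa [← InfiniteGalois.fixedField_fixingSubgroup N, IntermediateField.le_iff_le]

theorem finrank_eq_card_of_fixingSubgroup_eq_ker {H : Type*} [Group H] {M : IntermediateField F L}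
    {φ : (L ≃ₐ[F] L) →* H} (hφ : Surjective φ) (hM : M.fixingSubgroup = φ.ker) :
    Module.finrank F M = Nat.card H := by
  rw [IntermediateField.finrank_eq_fixingSubgroup_index, hM, Subgroup.index_ker,
    MonoidHom.range_eq_top.2 hφ, Subgroup.card_top]

end GaloisCorrespondence

section Benign

variable {F L Γ : Type*} [Field F] [Field L] [Algebra F L] [Group Γ]

/-- The field cut out by the zeroth coordinate of a homomorphism from the Galois group to `Γ^ℕ`. -/
def zerothField (ψ : (L ≃ₐ[F] L) →* (ℕ → Γ)) : IntermediateField F L :=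
  IntermediateField.fixedField ((Pi.evalMonoidHom (fun _ => Γ) 0).comp ψ).ker

variable [TopologicalSpace Γ] [DiscreteTopology Γ] {ψ : (L ≃ₐ[F] L) →* (ℕ → Γ)}

theorem isOpen_ker_zeroth (hψ : Continuous ψ) :
    IsOpen (((Pi.evalMonoidHom (fun _ => Γ) 0).comp ψ).ker : Set (L ≃ₐ[F] L)) :=
  (isOpen_discrete {(1 : Γ)}).preimage ((continuous_apply 0).comp hψ)

variable [IsGalois F L]

theorem fixingSubgroup_zerothField (hψ : Continuous ψ) :
    (zerothField ψ).fixingSubgroup = ((Pi.evalMonoidHom (fun _ => Γ) 0).comp ψ).ker :=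
  fixingSubgroup_fixedField_of_isClosed (Subgroup.isClosed_of_isOpen _ (isOpen_ker_zeroth hψ))

theorem finiteDimensional_and_isGalois_zerothField (hψ : Continuous ψ) :
    FiniteDimensional F (zerothField ψ) ∧ IsGalois F (zerothField ψ) := by
  rw [← InfiniteGalois.isOpen_and_normal_iff_finite_and_isGalois, fixingSubgroup_zerothField hψ]
  exact ⟨isOpen_ker_zeroth hψ, inferInstance⟩

variable {σ : L →+* L} {hσ : ∀ x : F, ∃ y : F, σ (algebraMap F L x) = algebraMap F L y}

theorem mem_fixingSubgroup_adjoin_image_zerothField_iff (hψ : Continuous ψ)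
    (hequiv : Semiconj ψ (galoisSigma hσ) (shiftHom Γ)) {n : ℕ} {g : L ≃ₐ[F] L} :
    g ∈ (IntermediateField.adjoin F (σ^[n] '' (zerothField ψ : Set L))).fixingSubgroup ↔
      ψ g n = 1 := by
  rw [mem_fixingSubgroup_adjoin_image_iterate_iff hσ, fixingSubgroup_zerothField hψ,
    MonoidHom.mem_ker, MonoidHom.comp_apply, (hequiv.iterate_right n).eq, Pi.evalMonoidHom_apply,
    iterate_shiftHom_apply, zero_add]

theorem mem_fixingSubgroup_adjoin_iUnion_zerothField_iff (hψ : Continuous ψ)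
    (hequiv : Semiconj ψ (galoisSigma hσ) (shiftHom Γ)) {ι : Type*} {k : ι → ℕ} {g : L ≃ₐ[F] L} :
    g ∈ (IntermediateField.adjoin F (⋃ i, σ^[k i] '' (zerothField ψ : Set L))).fixingSubgroup ↔
      ∀ i, ψ g (k i) = 1 := by
  simp only [← mem_fixingSubgroup_adjoin_image_zerothField_iff hψ hequiv,
    mem_fixingSubgroup_adjoin_iff, mem_iUnion]
  exact ⟨fun h i x hx => h x ⟨i, hx⟩, fun h x ⟨i, hx⟩ => h i x hx⟩

theorem adjoin_iUnion_zerothField (hψ : Continuous ψ)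
    (hequiv : Semiconj ψ (galoisSigma hσ) (shiftHom Γ)) {E : IntermediateField F L}
    (hker : ψ.ker = E.fixingSubgroup) :
    IntermediateField.adjoin F (⋃ n : ℕ, σ^[n] '' (zerothField ψ : Set L)) = E := by
  suffices h : (IntermediateField.adjoin F
      (⋃ n : ℕ, σ^[n] '' (zerothField ψ : Set L))).fixingSubgroup = E.fixingSubgroup from
    le_antisymm (le_of_fixingSubgroup_le h.ge) (le_of_fixingSubgroup_le h.le)
  ext g
  rw [mem_fixingSubgroup_adjoin_iUnion_zerothField_iff hψ hequiv, ← hker, MonoidHom.mem_ker,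
    funext_iff]
  rfl

theorem finrank_zerothField (hψ : Continuous ψ) (hsurj : Surjective ψ) :
    Module.finrank F (zerothField ψ) = Nat.card Γ :=
  finrank_eq_card_of_fixingSubgroup_eq_ker ((surjective_eval 0).comp hsurj)
    (fixingSubgroup_zerothField hψ)

theorem finrank_adjoin_image_zerothField (hψ : Continuous ψ) (hsurj : Surjective ψ)
    (hequiv : Semiconj ψ (galoisSigma hσ) (shiftHom Γ)) (n : ℕ) :
    Module.finrank F (IntermediateField.adjoin F (σ^[n] '' (zerothField ψ : Set L))) =
      Nat.card Γ := by
  have hcoord : Surjective ((Pi.evalMonoidHom (fun _ => Γ) n).comp ψ) :=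
    (surjective_eval n).comp hsurj
  refine finrank_eq_card_of_fixingSubgroup_eq_ker hcoord ?_
  ext g
  exact mem_fixingSubgroup_adjoin_image_zerothField_iff hψ hequiv

theorem finrank_adjoin_iUnion_fin_zerothField (hψ : Continuous ψ) (hsurj : Surjective ψ)
    (hequiv : Semiconj ψ (galoisSigma hσ) (shiftHom Γ)) (n : ℕ) :
    Module.finrank F (IntermediateField.adjoin F
      (⋃ k : Fin n, σ^[(k : ℕ)] '' (zerothField ψ : Set L))) = Nat.card Γ ^ n := by
  have hprefix : Surjective ((prefixHom Γ n).comp ψ) := (prefixHom_surjective n).comp hsurj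
  rw [finrank_eq_card_of_fixingSubgroup_eq_ker hprefix, Nat.card_fun, Nat.card_fin]
  ext g
  rw [mem_fixingSubgroup_adjoin_iUnion_zerothField_iff hψ hequiv, MonoidHom.mem_ker, funext_iff]
  rfl

end Benign

section Transfer

variable {K L : Type*} [Field K] [Field L] [Algebra K L] [IsGalois K L] {σ : L →+* L}
  {F E : IntermediateField K L} {Γ : FinSimpleGroup}

theorem benignExtension_of_galoisFactorIsFullShift (hF : ∀ x ∈ F, σ x ∈ F) (hFE : F ≤ E)
    (h : GaloisFactorIsFullShift σ F E Γ) : BenignExtension σ F E hFE := by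
  obtain ⟨ψ, hψ, hsurj, hequiv, hker⟩ := h
  have hσF (x : F) : ∃ y : F, σ (algebraMap F L x) = algebraMap F L y := ⟨⟨σ x, hF x x.2⟩, rfl⟩
  have hsemiconj : Semiconj ψ (galoisSigma hσF) (shiftHom Γ.carrier) := fun g =>
    hequiv g _ (map_galoisSigma_apply hσF g)
  have hkerE : ψ.ker = (IntermediateField.extendScalars hFE).fixingSubgroup := by
    ext g
    rw [IntermediateField.mem_fixingSubgroup_iff]
    exact hker g
  have hadjoin := adjoin_iUnion_zerothField hψ hsemiconj hkerE
  obtain ⟨hfinite, hgalois⟩ := finiteDimensional_and_isGalois_zerothField hψ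
  refine ⟨zerothField ψ, ?_, hfinite, hgalois, hadjoin, fun n => ?_, fun n => ?_⟩
  · rw [← hadjoin]
    exact fun x hx => IntermediateField.subset_adjoin _ _ (mem_iUnion.2 ⟨0, x, hx, rfl⟩)
  · rw [finrank_zerothField hψ hsurj, finrank_adjoin_image_zerothField hψ hsurj hsemiconj]
  · rw [finrank_zerothField hψ hsurj, finrank_adjoin_iUnion_fin_zerothField hψ hsurj hsemiconj]

theorem continuous_fixingSubgroupEquiv (F : IntermediateField K L) :
    Continuous F.fixingSubgroupEquiv :=
  continuous_of_forall_eventually_apply_eq F.fixingSubgroupEquiv.toMonoidHom fun x =>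
    continuous_subtype_val.tendsto' 1 1 rfl (eventually_apply_eq x)

theorem continuous_fixingSubgroupEquiv_symm (F : IntermediateField K L) :
    Continuous F.fixingSubgroupEquiv.symm := by
  have : Continuous (F.fixingSubgroup.subtype.comp F.fixingSubgroupEquiv.symm.toMonoidHom) :=
    continuous_of_forall_eventually_apply_eq _ eventually_apply_eq
  exact this.subtype_mk _

variable (hσ : ∀ x : K, ∃ y : K, σ (algebraMap K L x) = algebraMap K L y)

theorem galoisFactorIsFullShift_of_isShiftFactor
    (h : IsShiftFactor (galoisSigma hσ) F.fixingSubgroup E.fixingSubgroup Γ) :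
    GaloisFactorIsFullShift σ F E Γ := by
  obtain ⟨-, ψ, hψ, hsurj, hequiv, hker⟩ := h
  refine ⟨ψ.comp F.fixingSubgroupEquiv.symm.toMonoidHom,
    hψ.comp (continuous_fixingSubgroupEquiv_symm F),
    hsurj.comp F.fixingSubgroupEquiv.symm.surjective,
    fun g h hgh => hequiv _ _ (eq_galoisSigma_of_forall_map_apply hσ hgh), fun g => ?_⟩
  change F.fixingSubgroupEquiv.symm g ∈ ψ.ker ↔ _
  rw [hker, Subgroup.mem_subgroupOf, IntermediateField.mem_fixingSubgroup_iff]
  rfl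

theorem isShiftFactor_of_galoisFactorIsFullShift (hFE : F ≤ E)
    (h : GaloisFactorIsFullShift σ F E Γ) :
    IsShiftFactor (galoisSigma hσ) F.fixingSubgroup E.fixingSubgroup Γ := by
  obtain ⟨ψ, hψ, hsurj, hequiv, hker⟩ := h
  refine ⟨IntermediateField.fixingSubgroup_le hFE, ψ.comp F.fixingSubgroupEquiv.toMonoidHom,
    hψ.comp (continuous_fixingSubgroupEquiv F), hsurj.comp F.fixingSubgroupEquiv.surjective,
    fun g h hgh => hequiv _ _ fun x => ?_, ?_⟩
  · exact (congrArg (fun f : L ≃ₐ[K] L => σ (f x)) hgh).trans (map_galoisSigma_apply hσ g x)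
  · ext g
    rw [Subgroup.mem_subgroupOf, IntermediateField.mem_fixingSubgroup_iff]
    exact hker _

end Transfer

/-! ### The field `π₀^σ(L/K)` -/

section SigmaSeparable

variable {K L : Type*} [Field K] [Field L] [Algebra K L] {σ : L →+* L}

theorem map_mem_span_image (hσ : ∀ x : K, ∃ y : K, σ (algebraMap K L x) = algebraMap K L y)
    {S : Set L} {x : L} (hx : x ∈ Submodule.span K S) : σ x ∈ Submodule.span K (σ '' S) := by
  induction hx using Submodule.span_induction with
  | mem x hx => exact Submodule.subset_span ⟨x, hx, rfl⟩
  | zero => exact (map_zero σ).symm ▸ zero_mem _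
  | add x y _ _ hx hy => exact (map_add σ x y).symm ▸ add_mem hx hy
  | smul a x _ hx =>
    obtain ⟨b, hb⟩ := hσ a
    rw [Algebra.smul_def, map_mul, hb, ← Algebra.smul_def]
    exact Submodule.smul_mem _ _ hx

variable {M : IntermediateField K L}

theorem mem_span_range_basis {ι : Type*} (b : Module.Basis ι K M) {x : L} (hx : x ∈ M) :
    x ∈ Submodule.span K (range fun i => (b i : L)) := by
  have := Submodule.mem_map_of_mem (f := M.val.toLinearMap) (b.mem_span ⟨x, hx⟩)
  rwa [Submodule.map_span, ← range_comp] at this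

theorem span_range_map_basis (hσ : ∀ x : K, ∃ y : K, σ (algebraMap K L x) = algebraMap K L y)
    {ι : Type*} (b : Module.Basis ι K M) :
    Submodule.span K (range fun i => σ (b i)) = Submodule.span K (σ '' (M : Set L)) := by
  refine le_antisymm (Submodule.span_mono ?_) (Submodule.span_le.2 ?_)
  · rintro _ ⟨i, rfl⟩
    exact ⟨b i, (b i).2, rfl⟩
  · rintro _ ⟨x, hx, rfl⟩
    have := map_mem_span_image hσ (mem_span_range_basis b hx)
    rwa [← range_comp] at this

theorem span_image_le (hM : ∀ x ∈ M, σ x ∈ M) :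
    Submodule.span K (σ '' (M : Set L)) ≤ Subalgebra.toSubmodule M.toSubalgebra := by
  rw [Submodule.span_le]
  rintro _ ⟨x, hx, rfl⟩
  exact hM x hx

theorem linearIndependent_map_basis_iff
    (hσ : ∀ x : K, ∃ y : K, σ (algebraMap K L x) = algebraMap K L y) (hM : ∀ x ∈ M, σ x ∈ M)
    {ι : Type*} [Finite ι] (b : Module.Basis ι K M) :
    LinearIndependent K (fun i => σ (b i)) ↔
      Subalgebra.toSubmodule M.toSubalgebra ≤ Submodule.span K (σ '' (M : Set L)) := by
  have := Fintype.ofFinite ι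
  have : FiniteDimensional K (Subalgebra.toSubmodule M.toSubalgebra) :=
    b.finiteDimensional_of_finite
  have hrank : Module.finrank K (Subalgebra.toSubmodule M.toSubalgebra) = Fintype.card ι :=
    Module.finrank_eq_card_basis b
  rw [linearIndependent_iff_card_eq_finrank_span, Set.finrank, span_range_map_basis hσ, ← hrank]
  exact ⟨fun h => (Submodule.eq_of_le_of_finrank_eq (span_image_le hM) h.symm).ge,
    fun h => by rw [(span_image_le hM).antisymm h]⟩

theorem sigmaSeparable_iff_le_span_image [FiniteDimensional K M]
    (hσ : ∀ x : K, ∃ y : K, σ (algebraMap K L x) = algebraMap K L y) (hM : ∀ x ∈ M, σ x ∈ M) :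
    SigmaSeparable σ M ↔
      Subalgebra.toSubmodule M.toSubalgebra ≤ Submodule.span K (σ '' (M : Set L)) := by
  have hval : LinearMap.ker M.val.toLinearMap = ⊥ := LinearMap.ker_eq_bot.2 M.val.injective
  constructor
  · intro h
    have b := Module.finBasis K M
    exact (linearIndependent_map_basis_iff hσ hM b).1
      (h _ _ (fun i => (b i).2) (b.linearIndependent.map' _ hval))
  · intro h k f hf hindep
    have hindep' : LinearIndependent K fun i => (⟨f i, hf i⟩ : M) :=
      .of_comp M.val.toLinearMap hindep
    let b := Module.Basis.sumExtend hindep'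
    have := Module.Finite.finite_basis b
    have hmap := ((linearIndependent_map_basis_iff hσ hM b).2 h).comp Sum.inl Sum.inl_injective
    have hb (i : Fin k) : b (Sum.inl i) = ⟨f i, hf i⟩ :=
      (Module.Basis.reindex_apply _ _ _).trans (Module.Basis.extend_apply_self _ _)
    simpa only [Function.comp_def, hb] using hmap

variable [Algebra.IsAlgebraic K L]

theorem toSubmodule_adjoin_image (M : IntermediateField K L) :
    Subalgebra.toSubmodule (IntermediateField.adjoin K (σ '' (M : Set L))).toSubalgebra =
      Submodule.span K (σ '' (M : Set L)) := by
  have hclosure : Submonoid.closure (σ '' (M : Set L)) = M.toSubalgebra.toSubmonoid.map σ :=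
    Submonoid.closure_eq (M.toSubalgebra.toSubmonoid.map σ)
  rw [IntermediateField.adjoin_toSubalgebra_of_isAlgebraic
    fun x _ => Algebra.IsAlgebraic.isAlgebraic x, Algebra.adjoin_eq_span, hclosure]
  rfl

theorem sigmaSeparable_iff_le_adjoin_image [FiniteDimensional K M]
    (hσ : ∀ x : K, ∃ y : K, σ (algebraMap K L x) = algebraMap K L y) (hM : ∀ x ∈ M, σ x ∈ M) :
    SigmaSeparable σ M ↔ M ≤ IntermediateField.adjoin K (σ '' (M : Set L)) := by
  rw [sigmaSeparable_iff_le_span_image hσ hM, ← toSubmodule_adjoin_image]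
  rfl

end SigmaSeparable

section PiZero

variable {K L : Type*} [Field K] [Field L] [Algebra K L] [IsGalois K L] {σ : L →+* L}
  (hσ : ∀ x : K, ∃ y : K, σ (algebraMap K L x) = algebraMap K L y)

theorem sigmaSeparable_iff_comap_galoisSigma_le {M : IntermediateField K L} [FiniteDimensional K M]
    (hM : ∀ x ∈ M, σ x ∈ M) :
    SigmaSeparable σ M ↔ M.fixingSubgroup.comap (galoisSigma hσ) ≤ M.fixingSubgroup := by
  have hadjoin : (IntermediateField.adjoin K (σ '' (M : Set L))).fixingSubgroup =
      M.fixingSubgroup.comap (galoisSigma hσ) :=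
    Subgroup.ext fun g => mem_fixingSubgroup_adjoin_image_iterate_iff hσ (n := 1)
  rw [sigmaSeparable_iff_le_adjoin_image hσ hM, ← hadjoin]
  exact ⟨IntermediateField.fixingSubgroup_le, le_of_fixingSubgroup_le⟩

theorem isPi0Field_fixedField_sigmaComponent (hexp : IsExpansive (galoisSigma hσ)) :
    IsPi0Field σ (IntermediateField.fixedField (sigmaComponent (galoisSigma hσ))) := by
  set M := IntermediateField.fixedField (sigmaComponent (galoisSigma hσ))
  have hfix : M.fixingSubgroup = sigmaComponent (galoisSigma hσ) :=
    fixingSubgroup_fixedField_of_isClosed (isClosed_sigmaComponent _)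
  have hM : ∀ x ∈ M, σ x ∈ M := fun x =>
    map_mem_fixedField hσ fun g => hexp.apply_mem_sigmaComponent_iff.2
  obtain ⟨hfinite, hgalois⟩ := (InfiniteGalois.isOpen_and_normal_iff_finite_and_isGalois M).1
    (hfix ▸ ⟨hexp.isOpen_sigmaComponent, inferInstance⟩)
  refine ⟨hM, hfinite, hgalois, (sigmaSeparable_iff_comap_galoisSigma_le hσ hM).2 ?_⟩
  rw [hfix]
  exact fun g => hexp.apply_mem_sigmaComponent_iff.1

theorem sigmaComponent_le_fixingSubgroup {M : IntermediateField K L} (hM : IsPi0Field σ M) :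
    sigmaComponent (galoisSigma hσ) ≤ M.fixingSubgroup := by
  obtain ⟨hstable, hfinite, -, hsep⟩ := hM
  rw [sigmaSeparable_iff_comap_galoisSigma_le hσ hstable] at hsep
  refine Subgroup.topologicalClosure_minimal _ (fun g hg => ?_)
    (InfiniteGalois.fixingSubgroup_isClosed M)
  obtain ⟨n, hn⟩ := mem_eventualKernel.1 hg
  induction n generalizing g with
  | zero => exact (show g = 1 from hn) ▸ one_mem _
  | succ n ih => exact hsep (ih _ (apply_mem_eventualKernel_iff.2 hg) hn)

end PiZero

section Radicial

variable {K L : Type*} [Field K] [Field L] [Algebra K L] [IsGalois K L] {σ : L →+* L}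
  (hσ : ∀ x : K, ∃ y : K, σ (algebraMap K L x) = algebraMap K L y)

theorem iterate_map_mem_fixedField_of_le_ker {X : Subgroup (L ≃ₐ[K] L)} {m : ℕ}
    (hX : X ≤ (iterateHom (galoisSigma hσ) m).ker) (x : L) :
    σ^[m] x ∈ IntermediateField.fixedField X := by
  refine (IntermediateField.mem_fixedField_iff _ _).2 fun g hg => ?_
  rw [← iterate_galoisSigma_apply_eq_iff hσ, mem_ker_iterateHom.1 (hX hg), AlgEquiv.one_apply]

theorem exists_fixingSubgroup_le_ker_iterateHom
    (hfg : ∃ A : Finset L, IntermediateField.adjoin K (⋃ n : ℕ, (⇑σ)^[n] '' (A : Set L)) = ⊤)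
    {M : IntermediateField K L} (hM : ∀ x ∈ M, σ x ∈ M) (hrad : ∀ a : L, ∃ k : ℕ, σ^[k] a ∈ M) :
    ∃ m, M.fixingSubgroup ≤ (iterateHom (galoisSigma hσ) m).ker := by
  obtain ⟨A, hA⟩ := hfg
  choose k hk using hrad
  refine ⟨A.sup k, fun g hg => mem_ker_iterateHom.2 (eq_one_of_forall_apply_eq hA fun y hy => ?_)⟩
  obtain ⟨n, a, ha, rfl⟩ := mem_iUnion.1 hy
  rw [iterate_galoisSigma_apply_eq_iff hσ]
  refine (IntermediateField.mem_fixingSubgroup_iff _ _).1 hg _ ?_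
  obtain ⟨d, hd⟩ := Nat.exists_eq_add_of_le (Finset.le_sup ha : k a ≤ A.sup k)
  rw [← iterate_add_apply, hd, show k a + d + n = (d + n) + k a by lia, iterate_add_apply]
  exact MapsTo.iterate hM _ (hk a)

end Radicial

/-! ### Babbitt series -/

section BabbittSeries

variable {K L : Type*} [Field K] [Field L] [Algebra K L] [IsGalois K L] {σ : L →+* L}
  (hσ : ∀ x : K, ∃ y : K, σ (algebraMap K L x) = algebraMap K L y)

theorem babbittSeries_fixedField (hexp : IsExpansive (galoisSigma hσ)) {r m : ℕ}
    {X : ℕ → Subgroup (L ≃ₐ[K] L)} {Γ : ℕ → FinSimpleGroup}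
    (h : IsShiftSeries (galoisSigma hσ) r X Γ) (htop : X 0 = sigmaComponent (galoisSigma hσ))
    (hbot : X r ≤ (iterateHom (galoisSigma hσ) m).ker) :
    BabbittSeries σ (r + 1) (fun i => IntermediateField.fixedField (X i)) Γ := by
  have hstable (i : ℕ) (hi : i < r + 1) :
      ∀ x ∈ IntermediateField.fixedField (X i), σ x ∈ IntermediateField.fixedField (X i) :=
    fun x => map_mem_fixedField hσ (h.map_mem i (Nat.le_of_lt_succ hi))
  have hfix (i : ℕ) (hi : i ≤ r) : (IntermediateField.fixedField (X i)).fixingSubgroup = X i :=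
    fixingSubgroup_fixedField_of_isClosed (h.isClosed i hi)
  have hchain (i : ℕ) (hi : i + 1 < r + 1) :
      IntermediateField.fixedField (X i) ≤ IntermediateField.fixedField (X (i + 1)) :=
    IntermediateField.fixedField_le (h.factor i (Nat.lt_of_succ_lt_succ hi)).le
  refine ⟨r.succ_pos, hstable, hchain, ?_, fun i hi => ?_,
    fun a => ⟨m, iterate_map_mem_fixedField_of_le_ker hσ hbot a⟩⟩
  · simp only [htop]
    refine ⟨isPi0Field_fixedField_sigmaComponent hσ hexp, fun M hM => ?_⟩
    exact (IntermediateField.le_iff_le _ _).2 (sigmaComponent_le_fixingSubgroup hσ hM)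
  · have hfactor := h.factor i (Nat.lt_of_succ_lt_succ hi)
    rw [← hfix i (by lia), ← hfix (i + 1) (by lia)] at hfactor
    have hshift := galoisFactorIsFullShift_of_isShiftFactor hσ hfactor
    exact ⟨benignExtension_of_galoisFactorIsFullShift (hstable i (by lia)) _ hshift, hshift⟩

variable {n : ℕ} {Li : ℕ → IntermediateField K L} {Γ : ℕ → FinSimpleGroup}

theorem isShiftSeries_fixingSubgroup (h : BabbittSeries σ n Li Γ) :
    IsShiftSeries (galoisSigma hσ) (n - 1) (fun i => (Li i).fixingSubgroup) Γ := by
  obtain ⟨hn, hstable, hchain, -, hfactor, -⟩ := h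
  exact
    { isClosed := fun i _ => InfiniteGalois.fixingSubgroup_isClosed (Li i)
      map_mem := fun i hi _ => galoisSigma_mem_fixingSubgroup hσ (hstable i (by lia))
      factor := fun i hi => isShiftFactor_of_galoisFactorIsFullShift hσ (hchain i (by lia))
        (hfactor i (by lia)).2 }

theorem eventualKernel_le_fixingSubgroup (h : BabbittSeries σ n Li Γ) :
    eventualKernel (galoisSigma hσ) ≤ (Li 0).fixingSubgroup := by
  obtain ⟨-, -, -, ⟨hpi0, -⟩, -⟩ := h
  exact (Subgroup.le_topologicalClosure _).trans (sigmaComponent_le_fixingSubgroup hσ hpi0)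

theorem exists_fixingSubgroup_last_le_ker_iterateHom
    (hfg : ∃ A : Finset L, IntermediateField.adjoin K (⋃ n : ℕ, (⇑σ)^[n] '' (A : Set L)) = ⊤)
    (h : BabbittSeries σ n Li Γ) :
    ∃ m, (Li (n - 1)).fixingSubgroup ≤ (iterateHom (galoisSigma hσ) m).ker := by
  obtain ⟨hn, hstable, -, -, -, hrad⟩ := h
  exact exists_fixingSubgroup_le_ker_iterateHom hσ hfg (hstable _ (by lia)) hrad

end BabbittSeries

/-- **Babbitt's decomposition.** Let `L/K` be a finitely σ-generated Galois
extension of difference fields. Then there is a chain `K ⊆ L₁ ⊆ ⋯ ⊆ L_n ⊆ L` of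
intermediate σ-fields with `L₁ = π₀^σ(L/K)`, each `L_{i+1}/L_i` benign with Galois group
isomorphic (as an expansive profinite group) to the full one-sided group shift on a
finite simple group `Γ_i`, and `L/L_n` σ-radicial. Moreover, the length `n` and the
isomorphism classes of the `Γ_i` are uniquely determined by `L/K`. -/
theorem babbitt_decomposition
    {K L : Type*} [Field K] [Field L] [Algebra K L] [IsGalois K L]
    (σ : L →+* L)
    (hσK : ∀ x : K, ∃ y : K, σ (algebraMap K L x) = algebraMap K L y)
    (hfg : ∃ A : Finset L,
      IntermediateField.adjoin K (⋃ n : ℕ, (⇑σ)^[n] '' (A : Set L)) = ⊤) :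
    ∃ (n : ℕ) (Li : ℕ → IntermediateField K L) (Γ : ℕ → FinSimpleGroup),
      BabbittSeries σ n Li Γ ∧
      ∀ (m : ℕ) (Li' : ℕ → IntermediateField K L) (Δ : ℕ → FinSimpleGroup),
        BabbittSeries σ m Li' Δ →
        m = n ∧
        ∃ π : Equiv.Perm (Fin (n - 1)),
          ∀ i : Fin (n - 1),
            Nonempty ((Γ (i : ℕ)).carrier ≃* (Δ ((π i : Fin (n - 1)) : ℕ)).carrier) := by
  have hexp := isExpansive_galoisSigma hσK hfg
  obtain ⟨r, k, X, Γ, hX, htop, hbot⟩ := hexp.exists_isShiftSeries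
  refine ⟨r + 1, fun i => IntermediateField.fixedField (X i), Γ,
    babbittSeries_fixedField hσK hexp hX htop hbot, fun m Li' Δ hB => ?_⟩
  obtain ⟨l, hbot'⟩ := exists_fixingSubgroup_last_le_ker_iterateHom hσK hfg hB
  obtain ⟨hlength, e, he⟩ := hX.unique hexp
    (htop ▸ Subgroup.le_topologicalClosure _) hbot
    (isShiftSeries_fixingSubgroup hσK hB) (eventualKernel_le_fixingSubgroup hσK hB) hbot'
  obtain rfl : m = r + 1 := by
    have : 1 ≤ m := hB.1
    lia
  exact ⟨rfl, e, he⟩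
end

section
/- Let Γ be a finite group and G a one-sided group shift on Γ. Then there exists n ≥ 1 such that G is an n-step group shift of finite type; in particular, every one-sided group shift is a one-sided subshift of finite type (it is defined inside Γ^ℕ by the exclusion of a finite set of forbidden blocks). -/
open Function Set

/-- The one-sided shift map on sequences. -/
def oneShift {A : Type*} (a : ℕ → A) : ℕ → A := fun n => a (n + 1)

/-!
For `n : ℕ`, let `Eₙ ≤ Γ` (`followers G n`) consist of the entries `g n` of those `g ∈ G` whose
first `n` entries are `1`. Shifting shows that `E₀ ≥ E₁ ≥ E₂ ≥ ⋯`, so this chain is constant from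
some `N` on. If `g, h ∈ G` agree with `x` and with its shift, respectively, on their first `n + 1`
entries, then the error `(g (n + 1))⁻¹ * x (n + 1)` of `g` at position `n + 1` is the `n`-th entry
of `(oneShift g)⁻¹ * h`, hence lies in `Eₙ`. For `n ≥ N` it lies in `Eₙ₊₁` as well, so `g` can be
corrected at position `n + 1` without changing its first `n + 1` entries. Hence the blocks of length
`N + 1` control all longer ones, and closedness of `G` gives membership of the whole sequence.
-/

theorem oneShift_iterate_apply {A : Type*} (a : ℕ → A) (i k : ℕ) :
    oneShift^[i] a k = a (i + k) := by
  induction i generalizing k with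
  | zero => simp
  | succ i ih =>
    rw [iterate_succ_apply', oneShift, ih, Nat.add_right_comm, Nat.add_assoc]

theorem mem_of_isClosed_of_forall_exists_mem_cylinder {E : ℕ → Type*}
    [∀ n, TopologicalSpace (E n)] {S : Set (∀ n, E n)} (hS : IsClosed S) {x : ∀ n, E n}
    (h : ∀ n, ∃ a ∈ S, a ∈ PiNat.cylinder x n) : x ∈ S := by
  choose a ha hax using h
  have tendsto_x : Filter.Tendsto a Filter.atTop (nhds x) := by
    refine tendsto_pi_nhds.2 fun k => tendsto_const_nhds.congr' ?_
    filter_upwards [Filter.eventually_gt_atTop k] with n hn using (hax n k hn).symm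
  exact hS.mem_of_tendsto tendsto_x (Filter.Eventually.of_forall ha)

section InitialBlock

variable {M : Type*} [MulOneClass M]

/-- Truncation of a sequence to its initial block of length `n`, as a monoid homomorphism. The block
of `x` starting at position `i` is the initial block of `oneShift^[i] x`. -/
def initialBlock (M : Type*) [MulOneClass M] (n : ℕ) : (ℕ → M) →* (Fin n → M) :=
  MonoidHom.pi fun k => Pi.evalMonoidHom (fun _ => M) (k : ℕ)

theorem initialBlock_eq_iff {n : ℕ} {x y : ℕ → M} :
    initialBlock M n x = initialBlock M n y ↔ ∀ k < n, x k = y k :=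
  funext_iff.trans Fin.forall_iff

theorem initialBlock_oneShift_iterate (n i : ℕ) (x : ℕ → M) :
    initialBlock M n (oneShift^[i] x) = fun k : Fin n => x (i + k) :=
  funext fun k => oneShift_iterate_apply x i k

end InitialBlock

section InitialBlocks

variable {Γ : Type*} [Group Γ]

/-- The group of initial blocks of length `n` of elements of `G`; when `G` is shift-stable, these
are all the blocks of length `n` occurring in `G`. -/
def initialBlocks (G : Subgroup (ℕ → Γ)) (n : ℕ) : Subgroup (Fin n → Γ) :=
  G.map (initialBlock Γ n)

theorem initialBlock_mem_initialBlocks {G : Subgroup (ℕ → Γ)} {n : ℕ} {x : ℕ → Γ} :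
    initialBlock Γ n x ∈ initialBlocks G n ↔ ∃ g ∈ G, ∀ k < n, g k = x k := by
  simp only [initialBlocks, Subgroup.mem_map, initialBlock_eq_iff]

/-- The follower group of the trivial block of length `n`: the symbols that can come right after
`n` initial entries equal to `1` in an element of `G`. -/
def followers (G : Subgroup (ℕ → Γ)) (n : ℕ) : Subgroup Γ :=
  (G ⊓ (initialBlock Γ n).ker).map (Pi.evalMonoidHom (fun _ => Γ) n)

theorem mem_followers {G : Subgroup (ℕ → Γ)} {n : ℕ} {c : Γ} :
    c ∈ followers G n ↔ ∃ g ∈ G, (∀ k < n, g k = 1) ∧ g n = c := by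
  have mem_ker (g : ℕ → Γ) : g ∈ (initialBlock Γ n).ker ↔ ∀ k < n, g k = 1 := by
    rw [MonoidHom.mem_ker, ← map_one (initialBlock Γ n), initialBlock_eq_iff]
    rfl
  simp only [followers, Subgroup.mem_map, Subgroup.mem_inf, mem_ker, Pi.evalMonoidHom_apply,
    and_assoc]

end InitialBlocks

section ShiftStable

variable {Γ : Type*} [Group Γ] {G : Subgroup (ℕ → Γ)}

theorem followers_antitone (hG : MapsTo oneShift (G : Set (ℕ → Γ)) G) : Antitone (followers G) := by
  refine antitone_nat_of_succ_le fun n c hc => ?_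
  obtain ⟨g, hg, g_eq_one, g_last⟩ := mem_followers.1 hc
  exact mem_followers.2 ⟨oneShift g, hG hg, fun k hk => g_eq_one (k + 1) (by lia), g_last⟩

theorem exists_followers_le_followers_succ [WellFoundedLT (Subgroup Γ)]
    (hG : MapsTo oneShift (G : Set (ℕ → Γ)) G) :
    ∃ N, ∀ n ≥ N, followers G n ≤ followers G (n + 1) := by
  obtain ⟨N, hN⟩ := WellFoundedLT.antitone_chain_condition (followers_antitone hG)
  exact ⟨N, fun n hn => ((hN n hn).symm.trans (hN (n + 1) (by lia))).le⟩

theorem initialBlock_add_two_mem_initialBlocks (hG : MapsTo oneShift (G : Set (ℕ → Γ)) G) {n : ℕ}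
    (hn : followers G n ≤ followers G (n + 1)) {x : ℕ → Γ}
    (hx : initialBlock Γ (n + 1) x ∈ initialBlocks G (n + 1))
    (hx' : initialBlock Γ (n + 1) (oneShift x) ∈ initialBlocks G (n + 1)) :
    initialBlock Γ (n + 2) x ∈ initialBlocks G (n + 2) := by
  obtain ⟨g, hg, hgx⟩ := initialBlock_mem_initialBlocks.1 hx
  obtain ⟨h, hh, hhx⟩ := initialBlock_mem_initialBlocks.1 hx'
  have error_mem : (g (n + 1))⁻¹ * x (n + 1) ∈ followers G n := by
    refine mem_followers.2
      ⟨(oneShift g)⁻¹ * h, G.mul_mem (G.inv_mem (hG hg)) hh, fun k hk => ?_, ?_⟩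
    · simp [oneShift, hgx (k + 1) (by lia), hhx k (by lia)]
    · simp [oneShift, hhx n (by lia)]
  obtain ⟨c, hc, c_eq_one, c_last⟩ := mem_followers.1 (hn error_mem)
  refine initialBlock_mem_initialBlocks.2 ⟨g * c, G.mul_mem hg hc, fun k hk => ?_⟩
  rcases Nat.lt_succ_iff_lt_or_eq.1 hk with hk | rfl
  · simp [hgx k hk, c_eq_one k hk]
  · simp [c_last]

theorem initialBlock_oneShift_iterate_mem_of_le (hG : MapsTo oneShift (G : Set (ℕ → Γ)) G) {N : ℕ}
    (hN : ∀ n ≥ N, followers G n ≤ followers G (n + 1)) {x : ℕ → Γ}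
    (hx : ∀ i, initialBlock Γ (N + 1) (oneShift^[i] x) ∈ initialBlocks G (N + 1))
    {n : ℕ} (hn : N ≤ n) (i : ℕ) :
    initialBlock Γ (n + 1) (oneShift^[i] x) ∈ initialBlocks G (n + 1) := by
  induction n, hn using Nat.le_induction generalizing i with
  | base => exact hx i
  | succ n hn ih =>
    refine initialBlock_add_two_mem_initialBlocks hG (hN n hn) (ih i) ?_
    simpa only [iterate_succ_apply'] using ih (i + 1)

theorem mem_iff_forall_initialBlock_oneShift_iterate_mem [TopologicalSpace Γ]
    (hclosed : IsClosed (G : Set (ℕ → Γ))) (hG : MapsTo oneShift (G : Set (ℕ → Γ)) G) {N : ℕ}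
    (hN : ∀ n ≥ N, followers G n ≤ followers G (n + 1)) {x : ℕ → Γ} :
    x ∈ G ↔ ∀ i, initialBlock Γ (N + 1) (oneShift^[i] x) ∈ initialBlocks G (N + 1) := by
  refine ⟨fun hx i => Subgroup.mem_map_of_mem _ (hG.iterate i hx), fun hx => ?_⟩
  refine mem_of_isClosed_of_forall_exists_mem_cylinder hclosed fun n => ?_
  obtain ⟨g, hg, hgx⟩ := initialBlock_mem_initialBlocks.1 <|
    initialBlock_oneShift_iterate_mem_of_le hG hN hx (Nat.le_add_left N n) 0
  exact ⟨g, hg, fun k hk => hgx k (by lia)⟩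

end ShiftStable

theorem group_shift_is_finite_type_general {Γ : Type*} [Group Γ] [WellFoundedLT (Subgroup Γ)]
    [TopologicalSpace Γ] (G : Subgroup (ℕ → Γ)) (hclosed : IsClosed (G : Set (ℕ → Γ)))
    (hstable : ∀ g ∈ G, oneShift g ∈ G) :
    ∃ n : ℕ, 1 ≤ n ∧ ∃ H : Subgroup (Fin (n + 1) → Γ),
      ∀ g : ℕ → Γ, g ∈ G ↔ ∀ i : ℕ, (fun k : Fin (n + 1) => g (i + (k : ℕ))) ∈ H := by
  obtain ⟨N, hN⟩ := exists_followers_le_followers_succ hstable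
  refine ⟨N + 1, Nat.le_add_left 1 N, initialBlocks G (N + 1 + 1), fun g => ?_⟩
  simp only [← initialBlock_oneShift_iterate]
  exact mem_iff_forall_initialBlock_oneShift_iterate_mem hclosed hstable fun n hn => hN n (by lia)

/-- Let `Γ` be a finite group and `G` a one-sided group shift on `Γ`
(a closed shift-stable subgroup of `Γ^ℕ`). Then there exists `n ≥ 1` such that `G` is an
`n`-step group shift of finite type: for some subgroup `H ≤ Γ^{n+1}`, `G` consists of
exactly those sequences all of whose blocks of length `n+1` lie in `H`. In particular,
`G` is a one-sided subshift of finite type: it is cut out in `Γ^ℕ` by the exclusion of a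
finite set `F` of forbidden blocks. -/
theorem group_shift_is_finite_type
    {Γ : Type*} [Group Γ] [Finite Γ] [TopologicalSpace Γ] [DiscreteTopology Γ]
    (G : Subgroup (ℕ → Γ)) (hclosed : IsClosed (G : Set (ℕ → Γ)))
    (hstable : ∀ g ∈ G, oneShift g ∈ G) :
    ∃ n : ℕ, 1 ≤ n ∧
      (∃ H : Subgroup (Fin (n + 1) → Γ),
        ∀ g : ℕ → Γ, g ∈ G ↔ ∀ i : ℕ, (fun k : Fin (n + 1) => g (i + (k : ℕ))) ∈ H) ∧
      (∃ F : Set (Fin (n + 1) → Γ), F.Finite ∧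
        ∀ g : ℕ → Γ, g ∈ G ↔ ∀ i : ℕ, (fun k : Fin (n + 1) => g (i + (k : ℕ))) ∉ F) := by
  obtain ⟨n, hn, H, hH⟩ := group_shift_is_finite_type_general G hclosed hstable
  exact ⟨n, hn, ⟨H, hH⟩, (H : Set (Fin (n + 1) → Γ))ᶜ, toFinite _, fun g => by simpa using hH g⟩
end

section
/- Let G be a one-sided group shift on a finite group Γ, and for i ≥ 1 let d_i denote the cardinality of the image of G under the projection Γ^ℕ → Γ^i, (g₀,g₁,…) ↦ (g₀,…,g_{i−1}) (the number of blocks of length i occurring in elements of G). Then the sequence (log(d_i)/i)_{i≥1} converges, and its limit equals log(d) for an integer d ≥ 1; in fact d = ld(G). -/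
open Function Set Filter

/-- `blocks G m` is the set of blocks of length `m` occurring in elements of `G`,
i.e. the image of `G` under the projection `Γ^ℕ → Γ^m`, `(g₀,g₁,…) ↦ (g₀,…,g_{m-1})`. -/
def blocks {Γ : Type*} [Group Γ] (G : Subgroup (ℕ → Γ)) (m : ℕ) : Set (Fin m → Γ) :=
  (fun g : ℕ → Γ => fun k : Fin m => g k) '' (G : Set (ℕ → Γ))

/-- `kerCard G i` is the cardinality of the kernel of the truncation map
`π_i : G[i] → G[i-1]`, i.e. the number of blocks of length `i+1` occurring in `G` whose
first `i` entries are `1`. -/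
noncomputable def kerCard {Γ : Type*} [Group Γ] (G : Subgroup (ℕ → Γ)) (i : ℕ) : ℕ :=
  Nat.card {b : Fin (i + 1) → Γ |
    b ∈ blocks G (i + 1) ∧ ∀ k : Fin (i + 1), (k : ℕ) < i → b k = 1}

/-!
The number of blocks of length `n` telescopes: truncation is a surjective homomorphism from blocks
of length `m + 1` onto blocks of length `m`, so `d_n` is the product of the orders of its kernels
for `m < n`. A block in the kernel is determined by its last entry, which identifies the kernels
with subgroups of `Γ`; shifting makes these subgroups decrease, so their orders are eventually
constant. Hence `log d_n / n` is the Cesàro mean of an eventually constant sequence.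
-/

theorem tendsto_log_prod_range_div {u : ℕ → ℝ} {a : ℝ} (hu : ∀ i, u i ≠ 0) (ha : a ≠ 0)
    (hlim : Tendsto u atTop (nhds a)) :
    Tendsto (fun n : ℕ => Real.log (∏ i ∈ Finset.range n, u i) / n) atTop
      (nhds (Real.log a)) := by
  refine (hlim.log ha).cesaro.congr fun n => ?_
  rw [Real.log_prod fun i _ => hu i, div_eq_inv_mul]

section BlockGroups

variable {Γ : Type*} [Group Γ] (G : Subgroup (ℕ → Γ)) (m : ℕ)

/-- The set `blocks G m` as a subgroup of `Γ^m`, which is `G[m-1]` for `m ≥ 1`. -/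
def blockSubgroup : Subgroup (Fin m → Γ) :=
  G.map (MonoidHom.pi fun k : Fin m => Pi.evalMonoidHom (fun _ : ℕ => Γ) k)

/-- The homomorphism `π_m : G[m] → G[m-1]` deleting the last entry of a block. -/
def truncation : blockSubgroup G (m + 1) →* blockSubgroup G m where
  toFun b := ⟨Fin.init b.1, by
    obtain ⟨g, hg, hgb⟩ := b.2
    exact ⟨g, hg, hgb ▸ rfl⟩⟩
  map_one' := rfl
  map_mul' _ _ := rfl

theorem truncation_surjective : Surjective (truncation G m) := by
  rintro ⟨_, g, hg, rfl⟩
  exact ⟨⟨_, g, hg, rfl⟩, rfl⟩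

theorem mem_ker_truncation {b : blockSubgroup G (m + 1)} :
    b ∈ (truncation G m).ker ↔ ∀ k : Fin (m + 1), (k : ℕ) < m → b.1 k = 1 := by
  rw [MonoidHom.mem_ker, Subtype.ext_iff, funext_iff]
  exact ⟨fun h k hk => h ⟨k, hk⟩, fun h k => h k.castSucc k.2⟩

theorem card_ker_truncation : Nat.card (truncation G m).ker = kerCard G m :=
  Nat.card_congr <| (Equiv.subtypeEquivRight fun _ => mem_ker_truncation G m).trans <|
    Equiv.subtypeSubtypeEquivSubtypeInter (· ∈ blocks G (m + 1))
      fun b => ∀ k : Fin (m + 1), (k : ℕ) < m → b k = 1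

theorem card_blocks_succ : Nat.card (blocks G (m + 1)) = Nat.card (blocks G m) * kerCard G m :=
  calc
    Nat.card (blockSubgroup G (m + 1))
      = (truncation G m).ker.index * Nat.card (truncation G m).ker :=
        (truncation G m).ker.index_mul_card.symm
    _ = Nat.card (blockSubgroup G m) * kerCard G m := by
        rw [Subgroup.index_ker, (truncation G m).range_eq_top_of_surjective
          (truncation_surjective G m), Subgroup.card_top, card_ker_truncation]

theorem card_blocks_zero : Nat.card (blocks G 0) = 1 :=
  Subgroup.card_eq_one.mpr (Subsingleton.elim (blockSubgroup G 0) ⊥)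

theorem card_blocks_eq_prod_kerCard :
    Nat.card (blocks G m) = ∏ i ∈ Finset.range m, kerCard G i :=
  (Finset.prod_range_induction (kerCard G) (fun n => Nat.card (blocks G n))
    (card_blocks_zero G) m fun i _ => card_blocks_succ G i).symm

end BlockGroups

section LeadingEntries

variable {Γ : Type*} [Group Γ] (G : Subgroup (ℕ → Γ)) (m : ℕ)

/-- The subgroup of `Γ` formed by the entries at position `m` of those elements of `G` whose
entries before position `m` are all `1`: the kernel of `π_m` seen inside `Γ`. -/
def leadingEntries : Subgroup Γ :=
  (G ⊓ ⨅ k < m, (Pi.evalMonoidHom (fun _ : ℕ => Γ) k).ker).map (Pi.evalMonoidHom _ m)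

variable {G m} in
theorem mem_leadingEntries {γ : Γ} :
    γ ∈ leadingEntries G m ↔ ∃ g ∈ G, (∀ k < m, g k = 1) ∧ g m = γ := by
  simp [leadingEntries, Subgroup.mem_iInf, MonoidHom.mem_ker, and_assoc]

theorem card_leadingEntries : Nat.card (leadingEntries G m) = kerCard G m := by
  let kernel : Set (Fin (m + 1) → Γ) :=
    {b | b ∈ blocks G (m + 1) ∧ ∀ k : Fin (m + 1), (k : ℕ) < m → b k = 1}
  have image_last : (fun b => b (Fin.last m)) '' kernel = leadingEntries G m := by
    ext γ
    rw [SetLike.mem_coe, mem_leadingEntries]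
    constructor
    · rintro ⟨_, ⟨⟨g, hg, rfl⟩, htriv⟩, rfl⟩
      exact ⟨g, hg, fun k hk => htriv ⟨k, hk.trans m.lt_succ_self⟩ hk, rfl⟩
    · rintro ⟨g, hg, htriv, rfl⟩
      exact ⟨_, ⟨⟨g, hg, rfl⟩, fun k hk => htriv k hk⟩, rfl⟩
  have injOn_last : InjOn (fun b => b (Fin.last m)) kernel := by
    intro b hb c hc hlast
    funext k
    induction k using Fin.lastCases with
    | last => exact hlast
    | cast j => rw [hb.2 _ j.2, hc.2 _ j.2]
  calc
    Nat.card (leadingEntries G m) = Nat.card ((fun b => b (Fin.last m)) '' kernel) := by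
      rw [image_last]; rfl
    _ = kerCard G m := Nat.card_image_of_injOn injOn_last

variable {G}

theorem leadingEntries_antitone (hstable : ∀ g ∈ G, oneShift g ∈ G) :
    Antitone (leadingEntries G) := by
  refine antitone_nat_of_succ_le fun m γ hγ => ?_
  obtain ⟨g, hg, htriv, rfl⟩ := mem_leadingEntries.mp hγ
  exact mem_leadingEntries.mpr
    ⟨oneShift g, hstable g hg, fun k hk => htriv (k + 1) (Nat.succ_lt_succ hk), rfl⟩

theorem finite_leadingEntries (hfinite : (blocks G 1).Finite)
    (hstable : ∀ g ∈ G, oneShift g ∈ G) : Finite (leadingEntries G m) := by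
  refine ((hfinite.image fun b => b 0).subset fun γ hγ => ?_).to_subtype
  obtain ⟨g, hg, -, rfl⟩ := mem_leadingEntries.mp (leadingEntries_antitone hstable m.zero_le hγ)
  exact ⟨_, ⟨g, hg, rfl⟩, rfl⟩

theorem kerCard_pos (hfinite : (blocks G 1).Finite) (hstable : ∀ g ∈ G, oneShift g ∈ G) :
    0 < kerCard G m := by
  have := finite_leadingEntries m hfinite hstable
  exact card_leadingEntries G m ▸ Nat.card_pos

theorem kerCard_antitone (hfinite : (blocks G 1).Finite) (hstable : ∀ g ∈ G, oneShift g ∈ G) :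
    Antitone (kerCard G) := by
  intro m n hmn
  have := finite_leadingEntries m hfinite hstable
  rw [← card_leadingEntries, ← card_leadingEntries]
  exact Subgroup.card_le_of_le (leadingEntries_antitone hstable hmn)

end LeadingEntries

/-- The limit degree `ld(G)`, defined as the smallest of the numbers `|ker π_i|`; this is their
eventual value because the sequence is non-increasing for a group shift. -/
noncomputable def limitDegree {Γ : Type*} [Group Γ] (G : Subgroup (ℕ → Γ)) : ℕ :=
  ⨅ i, kerCard G i

section Entropy

variable {Γ : Type*} [Group Γ] {G : Subgroup (ℕ → Γ)}

theorem eventually_kerCard_eq_limitDegree (hfinite : (blocks G 1).Finite)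
    (hstable : ∀ g ∈ G, oneShift g ∈ G) : ∀ᶠ i in atTop, kerCard G i = limitDegree G := by
  have hlim : Tendsto (kerCard G) atTop (nhds (limitDegree G)) :=
    tendsto_atTop_ciInf (kerCard_antitone hfinite hstable) (OrderBot.bddBelow _)
  rwa [nhds_discrete, tendsto_pure] at hlim

theorem limitDegree_pos (hfinite : (blocks G 1).Finite) (hstable : ∀ g ∈ G, oneShift g ∈ G) :
    0 < limitDegree G := by
  obtain ⟨i, hi⟩ := (eventually_kerCard_eq_limitDegree hfinite hstable).exists
  exact hi ▸ kerCard_pos i hfinite hstable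

theorem entropy_eq_log_limitDegree_general (hfinite : (blocks G 1).Finite)
    (hstable : ∀ g ∈ G, oneShift g ∈ G) :
    1 ≤ limitDegree G ∧ (∀ᶠ i in atTop, kerCard G i = limitDegree G) ∧
      Tendsto (fun i : ℕ => Real.log (Nat.card (blocks G i)) / (i : ℝ)) atTop
        (nhds (Real.log (limitDegree G))) := by
  have hpos : 0 < limitDegree G := limitDegree_pos hfinite hstable
  have heventually := eventually_kerCard_eq_limitDegree hfinite hstable
  have hlim : Tendsto (fun i => (kerCard G i : ℝ)) atTop (nhds (limitDegree G)) :=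
    tendsto_nhds_of_eventually_eq (heventually.mono fun _ => congrArg Nat.cast)
  have hkerCard (i : ℕ) : (kerCard G i : ℝ) ≠ 0 :=
    Nat.cast_ne_zero.mpr (kerCard_pos i hfinite hstable).ne'
  refine ⟨hpos, heventually, ?_⟩
  simpa only [card_blocks_eq_prod_kerCard, Nat.cast_prod] using
    tendsto_log_prod_range_div hkerCard (Nat.cast_ne_zero.mpr hpos.ne') hlim

end Entropy

/-- Let `G` be a one-sided group shift on a finite group `Γ`, and let
`d_i` be the number of blocks of length `i` occurring in elements of `G`. Then the
sequence `log(d_i)/i` converges, and its limit is `log d` for an integer `d ≥ 1`;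
in fact `d = ld(G)`, the eventual value of the sequence `i ↦ |ker π_i|`. -/
theorem entropy_eq_log_limitDegree
    {Γ : Type*} [Group Γ] [Finite Γ] [TopologicalSpace Γ] [DiscreteTopology Γ]
    (G : Subgroup (ℕ → Γ)) (hclosed : IsClosed (G : Set (ℕ → Γ)))
    (hstable : ∀ g ∈ G, oneShift g ∈ G) :
    ∃ d : ℕ, 1 ≤ d ∧ (∀ᶠ i in atTop, kerCard G i = d) ∧
      Tendsto (fun i : ℕ => Real.log (Nat.card (blocks G i)) / (i : ℝ)) atTop
        (nhds (Real.log d)) := by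
  exact ⟨limitDegree G, entropy_eq_log_limitDegree_general (toFinite _) hstable⟩
end
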